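/- In the standing setup, suppose X̂^0 = A^0 ∪ B^0 where A^0 and B^0 are disjoint closed sets such that A^0 lies above B^0. For t ∈ [0,1] let A^t be the union of the components C^t over all components C of A^0, and define B^t analogously. Then for each t ∈ [0,1], X̂^t = A^t ∪ B^t, and A^t and B^t are disjoint, closed, and non-interlaced. -/

import Mathlib

open Set Metric Topology Filter

/-- The set of connected components of a set `S`. -/
def componentsOf {α : Type*} [TopologicalSpace α] (S : Set α) : Set (Set α) :=
  {C | ∃ x ∈ S, C = connectedComponentIn S x}

/-- The union of the unbounded connected components of the complement of `K`;
for compact `K` this is the (unique) unbounded component of `ℂ \ K`. -/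
def unbddComp (K : Set ℂ) : Set ℂ :=
  {z : ℂ | z ∈ Kᶜ ∧ ¬ Bornology.IsBounded (connectedComponentIn Kᶜ z)}

/-- `X^t = ℂ \ U^t`, where `U^t` is the unbounded component of `ℂ \ h^t(Bd X)`. -/
def XtSet (h : ℂ → ℝ → ℂ) (X : Set ℂ) (t : ℝ) : Set ℂ :=
  (unbddComp ((fun z => h z t) '' frontier X))ᶜ

/-- `X̂^t = exp⁻¹(X^t \ {0})`. -/
def hatXt (h : ℂ → ℝ → ℂ) (X : Set ℂ) (t : ℝ) : Set ℂ :=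
  Complex.exp ⁻¹' (XtSet h X t \ {0})

/-- `X̂ = exp⁻¹(X \ {0})`. -/
def hatSet (X : Set ℂ) : Set ℂ := Complex.exp ⁻¹' (X \ {0})

/-- The lift `exp⁻¹(Bd(X) \ {0})` of the punctured boundary of `X`. -/
def bdLift (X : Set ℂ) : Set ℂ := Complex.exp ⁻¹' (frontier X \ {0})

/-- The conditions on the path `s` in the definition of "C lies above D":
`s : [0,1] → {z : Re z ≤ 0} \ C`, `s 0 ∈ D`, `s 1 = 0`. -/
def AbovePath (C D : Set ℂ) (s : ℝ → ℂ) : Prop :=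
  ContinuousOn s (Set.Icc 0 1) ∧ (∀ u ∈ Set.Icc (0:ℝ) 1, (s u).re ≤ 0 ∧ s u ∉ C) ∧
    s 0 ∈ D ∧ s 1 = 0

/-- The ray `R = s([0,1]) ∪ [0,∞)` associated to the path `s`. -/
def AboveRay (s : ℝ → ℂ) : Set ℂ := s '' Set.Icc 0 1 ∪ (Complex.ofReal '' Set.Ici 0)

/-- `C` is contained in the unbounded component of `ℂ \ (D ∪ R)` containing `1 + 2πi`. -/
def AboveVia (C D : Set ℂ) (s : ℝ → ℂ) : Prop :=
  ¬ Bornology.IsBounded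
      (connectedComponentIn (D ∪ AboveRay s)ᶜ ((1 : ℂ) + 2 * (Real.pi : ℂ) * Complex.I)) ∧
  C ⊆ connectedComponentIn (D ∪ AboveRay s)ᶜ ((1 : ℂ) + 2 * (Real.pi : ℂ) * Complex.I)

/-- `C` lies above `D`. -/
def LiesAbove (C D : Set ℂ) : Prop := ∃ s : ℝ → ℂ, AbovePath C D s ∧ AboveVia C D s

/-- `A` lies above `B`: every component of `A` lies above every component of `B`. -/
def LiesAboveSets (A B : Set ℂ) : Prop :=
  ∀ C ∈ componentsOf A, ∀ D ∈ componentsOf B, LiesAbove C D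

/-- Disjoint closed sets `A`, `B` are non-interlaced: for each `z ∉ A ∪ B`, with
`r = dist(z, A ∪ B)`, the sets `A ∩ S(z,r)` and `B ∩ S(z,r)` are contained in two
disjoint closed connected (possibly empty) subsets of the circle `S(z,r)`. -/
def NonInterlaced (A B : Set ℂ) : Prop :=
  ∀ z ∉ A ∪ B,
    ∃ JA JB : Set ℂ,
      JA ⊆ Metric.sphere z (Metric.infDist z (A ∪ B)) ∧
      JB ⊆ Metric.sphere z (Metric.infDist z (A ∪ B)) ∧
      IsClosed JA ∧ IsClosed JB ∧ IsPreconnected JA ∧ IsPreconnected JB ∧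
      Disjoint JA JB ∧
      A ∩ Metric.sphere z (Metric.infDist z (A ∪ B)) ⊆ JA ∧
      B ∩ Metric.sphere z (Metric.infDist z (A ∪ B)) ⊆ JB

/-!
For a closed set `F`, a point `z` and a base point `p`, both outside `F`, the quotient
`(z - w) / (p - w)` has a logarithm on `F` tending to `0` at infinity if and only if `z` and `p`
lie in the same component of the complement of `F` (Borsuk's criterion, with a condition at
infinity). If no nonempty clopen part of `F` is compact, this logarithm is unique; adding
`log (p - w)` to it gives a canonical branch of `log (z - w)` on `F`.

If `A` lies above `B`, then following the ray from a component of `B` to infinity shows that for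
`a ∈ A` and `b ∈ B` the canonical branch of `log (a - b)` exceeds that of `log (b - a)` by exactly
`πi`. Along the lifted isotopy, which is proper because `h` is defined on a compact set and the
lift commutes with translation by `2πi`, both branches are continued by homotopy lifting, so they
differ by `πi` at every time `t`. Borsuk's criterion also shows that the two pieces stay outside
each other's hulls.

At time `t`, let `z` be the centre of an open disk missing both hulls, with points `a` and `b` of
the two pieces on its boundary. Moving the base point from `z` along a radius to `a` or `b` changes
each argument by less than `π / 2`, so the arguments of `z - a` and `z - b` given by the two
branches differ by an element of `(0, 2π)`. Hence the two pieces meet the circle in disjoint arcs.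
-/

/-! ### Continuous logarithms -/

section ExpLift

variable {E : Type*} [TopologicalSpace E] {S : Set E} {f g : E → ℂ} {x y : E}

lemma eqOn_of_eqOn_exp_comp (hS : IsPreconnected S) (hf : ContinuousOn f S)
    (hg : ContinuousOn g S) (h : EqOn (Complex.exp ∘ f) (Complex.exp ∘ g) S)
    (hx : x ∈ S) (hfg : f x = g x) : EqOn f g S :=
  Complex.isCoveringMap_exp.eqOn_of_comp_eqOn hS hf hg (fun _ hy => Subtype.ext (h hy)) hx hfg

lemma sub_eq_sub_of_eqOn_exp_comp (hS : IsPreconnected S) (hf : ContinuousOn f S)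
    (hg : ContinuousOn g S) (h : EqOn (Complex.exp ∘ f) (Complex.exp ∘ g) S)
    (hx : x ∈ S) (hy : y ∈ S) : f x - g x = f y - g y := by
  have hexp : ∀ z ∈ S, Complex.exp (f z - g z) = 1 := fun z hz => by
    rw [Complex.exp_sub, show Complex.exp (f z) = Complex.exp (g z) from h hz,
      div_self (Complex.exp_ne_zero _)]
  exact Complex.isCoveringMap_exp.constOn_of_comp hS (hf.sub hg)
    (fun a ha b hb => Subtype.ext ((hexp a ha).trans (hexp b hb).symm)) hx hy

lemma eq_add_pi_mul_I_of_exp_eq_neg (hS : IsPreconnected S) (hf : ContinuousOn f S)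
    (hg : ContinuousOn g S) (h : ∀ z ∈ S, Complex.exp (f z) = -Complex.exp (g z))
    (hx : x ∈ S) (hfg : f x = g x + Real.pi * Complex.I) (hy : y ∈ S) :
    f y = g y + Real.pi * Complex.I :=
  eqOn_of_eqOn_exp_comp hS hf (hg.add continuousOn_const)
    (fun z hz => by simp [h z hz, Complex.exp_add]) hx hfg hy

lemma exists_continuous_exp_eq [SimplyConnectedSpace E] [LocallyPathConnectedSpace E]
    {φ : E → ℂ} (hφ : Continuous φ) (h0 : ∀ x, φ x ≠ 0) :
    ∃ Φ : E → ℂ, Continuous Φ ∧ ∀ x, Complex.exp (Φ x) = φ x := by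
  have x₀ : E := Classical.arbitrary E
  obtain ⟨Φ, ⟨-, hexp⟩, -⟩ := Complex.isCoveringMapOn_exp.existsUnique_continuousMap_lifts
    ⟨φ, hφ⟩ (Complex.exp_log (h0 x₀)) h0
  exact ⟨Φ, Φ.continuous, congrFun hexp⟩

/-- A separation `u ∪ v` of `P ∩ Q` yields a nonvanishing function equal to `exp (2πi g)` on `P` and
to `1` on `Q`, where `g` is `0` on `u` and `1` on `v`; its logarithm contradicts connectedness. -/
theorem isPreconnected_inter_of_union_eq_univ [SimplyConnectedSpace E]
    [LocallyPathConnectedSpace E] [NormalSpace E] {P Q : Set E} (hP : IsClosed P)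
    (hQ : IsClosed Q) (hPc : IsPreconnected P) (hQc : IsPreconnected Q) (hPQ : P ∪ Q = univ) :
    IsPreconnected (P ∩ Q) := by
  rw [isPreconnected_iff_subset_of_fully_disjoint_closed (hP.inter hQ)]
  intro u v hu hv huv hd
  obtain ⟨g, hgu, hgv, -⟩ := exists_continuous_zero_one_of_isClosed hu hv hd
  let G : E → ℂ := fun w => 2 * Real.pi * Complex.I * (g w : ℂ)
  have hG : Continuous G := by fun_prop
  have hG1 : ∀ w ∈ P ∩ Q, Complex.exp (G w) = 1 := fun w hw => by
    rcases huv hw with h | h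
    · simp [G, hgu h]
    · simp [G, hgv h, Complex.exp_two_pi_mul_I]
  classical
  let φ : E → ℂ := P.piecewise (fun w => Complex.exp (G w)) fun _ => 1
  have hfrP : frontier P ⊆ P ∩ Q := fun w hw =>
    ⟨hP.frontier_subset hw, hQ.closure_subset_iff.2 (compl_subset_iff_union.2 hPQ)
      (closure_compl (s := P) ▸ hw.2)⟩
  have hφ : Continuous φ :=
    hG.cexp.piecewise (fun w hw => hG1 w (hfrP hw)) continuous_const
  have hφP : ∀ w ∈ P, φ w = Complex.exp (G w) := fun w hw => piecewise_eq_of_mem _ _ _ hw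
  have hφQ : ∀ w ∈ Q, φ w = 1 := fun w hw => by
    by_cases hwP : w ∈ P
    · rw [hφP w hwP, hG1 w ⟨hwP, hw⟩]
    · exact piecewise_eq_of_notMem _ _ _ hwP
  obtain ⟨Φ, hΦ, hΦφ⟩ := exists_continuous_exp_eq hφ fun w => by
    by_cases hwP : w ∈ P
    · rw [hφP w hwP]; exact Complex.exp_ne_zero _
    · rw [hφQ w ((hPQ ▸ mem_univ w : w ∈ P ∪ Q).resolve_left hwP)]; exact one_ne_zero
  by_contra! hsep
  obtain ⟨⟨x, hx, hxu⟩, y, hy, hyv⟩ := And.intro (not_subset.1 hsep.1) (not_subset.1 hsep.2)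
  have hxv : G x = 2 * Real.pi * Complex.I := by simp [G, hgv ((huv hx).resolve_left hxu)]
  have hyu : G y = 0 := by simp [G, hgu ((huv hy).resolve_right hyv)]
  have h1 : Φ x - G x = Φ y - G y := sub_eq_sub_of_eqOn_exp_comp hPc hΦ.continuousOn
    hG.continuousOn (fun w hw => (hΦφ w).trans (hφP w hw)) hx.1 hy.1
  have h2 : Φ x - 0 = Φ y - 0 := sub_eq_sub_of_eqOn_exp_comp hQc hΦ.continuousOn
    (continuousOn_const (c := (0 : ℂ))) (fun w hw => by simp [hΦφ w, hφQ w hw]) hx.2 hy.2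
  rw [hxv, hyu] at h1
  exact Complex.two_pi_I_ne_zero (by linear_combination h2 - h1)

lemma isPreconnected_frontier [SimplyConnectedSpace E] [LocallyPathConnectedSpace E]
    [NormalSpace E] (hS : IsClosed S) (hSc : IsPreconnected S) (hSc' : IsPreconnected Sᶜ) :
    IsPreconnected (frontier S) := by
  rw [frontier_eq_closure_inter_closure, hS.closure_eq]
  exact isPreconnected_inter_of_union_eq_univ hS isClosed_closure hSc hSc'.closure
    (compl_subset_iff_union.1 subset_closure)

end ExpLift

/-! ### Components of closed sets and filled hulls -/

section Components

variable {E : Type*} [TopologicalSpace E] {F G S : Set E} {p x y z : E}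

lemma subset_of_isPreconnected_of_inter_eq (hS : IsPreconnected S) {O C : Set E} (hO : IsOpen O)
    (hC : IsClosed C) (hOC : S ∩ O = S ∩ C) (hne : (S ∩ O).Nonempty) : S ⊆ O := by
  have hcover : S ⊆ O ∪ Cᶜ := fun w hw => by
    by_cases h : w ∈ C
    · exact Or.inl (hOC.ge ⟨hw, h⟩).2
    · exact Or.inr h
  by_contra hsub
  obtain ⟨w, hwS, hwO⟩ := not_subset.1 hsub
  obtain ⟨v, hvS, hvO, hvC⟩ := hS O Cᶜ hO hC.isOpen_compl hcover hne
    ⟨w, hwS, fun hwC => hwO (hOC.ge ⟨hwS, hwC⟩).2⟩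
  exact hvC (hOC.le ⟨hvS, hvO⟩).2

/-- `F` has no nonempty compact relatively open subset. On such a set a continuous function with
discrete range that tends to `0` at infinity vanishes. -/
def NoCompactClopen (F : Set E) : Prop :=
  ∀ O : Set E, IsOpen O → IsCompact (O ∩ F) → O ∩ F = ∅

lemma NoCompactClopen.inter_of_subset_union (h : NoCompactClopen S) (hS : S ⊆ F ∪ G)
    (hFG : Disjoint F G) (hG : IsClosed G) : NoCompactClopen (F ∩ S) := by
  have hinter (O : Set E) : (O ∩ Gᶜ) ∩ S = O ∩ (F ∩ S) := by
    ext x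
    exact ⟨fun hx => ⟨hx.1.1, (hS hx.2).resolve_right hx.1.2, hx.2⟩,
      fun hx => ⟨⟨hx.1, disjoint_left.1 hFG hx.2.1⟩, hx.2.2⟩⟩
  intro O hO hc
  rw [← hinter] at hc ⊢
  exact h _ (hO.inter hG.isOpen_compl) hc

lemma NoCompactClopen.of_union (h : NoCompactClopen (F ∪ G)) (hFG : Disjoint F G)
    (hG : IsClosed G) : NoCompactClopen F :=
  inter_eq_left.2 (subset_union_left : F ⊆ F ∪ G) ▸ h.inter_of_subset_union subset_rfl hFG hG

lemma isClosed_connectedComponentIn (hF : IsClosed F) : IsClosed (connectedComponentIn F x) := by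
  by_cases hx : x ∈ F
  · refine isClosed_of_closure_subset ?_
    exact isPreconnected_connectedComponentIn.closure.subset_connectedComponentIn
      (subset_closure (mem_connectedComponentIn hx))
      (closure_minimal (connectedComponentIn_subset F x) hF)
  · rw [connectedComponentIn_eq_empty hx]; exact isClosed_empty

lemma connectedComponentIn_union_subset (hF : IsClosed F) (hG : IsClosed G)
    (hFG : Disjoint F G) (hx : x ∈ F) : connectedComponentIn (F ∪ G) x ⊆ F := by
  have hsub := connectedComponentIn_subset (F ∪ G) x
  have hinter : connectedComponentIn (F ∪ G) x ∩ Gᶜ = connectedComponentIn (F ∪ G) x ∩ F := by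
    ext w
    exact ⟨fun h => ⟨h.1, (hsub h.1).resolve_right h.2⟩,
      fun h => ⟨h.1, disjoint_left.1 hFG h.2⟩⟩
  have hG' := subset_of_isPreconnected_of_inter_eq isPreconnected_connectedComponentIn
    hG.isOpen_compl hF hinter ⟨x, mem_connectedComponentIn (Or.inl hx), disjoint_left.1 hFG hx⟩
  exact fun w hw => (hsub hw).resolve_right (hG' hw)

lemma exists_isOpen_isCompact_inter [LocallyCompactSpace E] [T2Space E] (hF : IsClosed F)
    (hx : x ∈ F) (hc : IsCompact (connectedComponentIn F x)) :
    ∃ O, IsOpen O ∧ x ∈ O ∧ IsCompact (O ∩ F) := by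
  obtain ⟨K, hK, hDK⟩ := exists_compact_superset hc
  have hxK : x ∈ K ∩ F := ⟨interior_subset (hDK (mem_connectedComponentIn hx)), hx⟩
  have : CompactSpace ↥(K ∩ F) := isCompact_iff_compactSpace.1 (hK.inter_right hF)
  let x' : ↥(K ∩ F) := ⟨x, hxK⟩
  have hcomp : ∀ y ∈ connectedComponent x', (y : E) ∈ interior K := fun y hy => hDK <|
    (isPreconnected_connectedComponent.image _
      continuous_subtype_val.continuousOn).subset_connectedComponentIn
      ⟨x', mem_connectedComponent, rfl⟩ (by rintro _ ⟨z, -, rfl⟩; exact z.2.2) ⟨y, hy, rfl⟩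
  obtain ⟨Z, hZ, hxZ, hZK⟩ : ∃ Z, IsClopen Z ∧ x' ∈ Z ∧ Z ⊆ Subtype.val ⁻¹' interior K := by
    have : Nonempty { s : Set ↥(K ∩ F) // IsClopen s ∧ x' ∈ s } :=
      ⟨⟨univ, isClopen_univ, mem_univ _⟩⟩
    obtain ⟨⟨Z, hZ, hxZ⟩, hZK⟩ := exists_subset_nhds_of_compactSpace
      (V := fun s : { s : Set ↥(K ∩ F) // IsClopen s ∧ x' ∈ s } => (s : Set ↥(K ∩ F)))
      (fun a b => ⟨⟨a.1 ∩ b.1, a.2.1.inter b.2.1, a.2.2, b.2.2⟩, inter_subset_left,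
        inter_subset_right⟩) (fun s => s.2.1.isClosed)
      (fun y hy => (isOpen_interior.preimage continuous_subtype_val).mem_nhds
        (hcomp y (connectedComponent_eq_iInter_isClopen x' ▸ hy)))
    exact ⟨Z, hZ, hxZ, hZK⟩
  obtain ⟨O, hO, rfl⟩ := hZ.isOpen
  refine ⟨O ∩ interior K, hO.inter isOpen_interior, ⟨hxZ, hZK hxZ⟩, ?_⟩
  convert hZ.isClosed.isCompact.image continuous_subtype_val using 1
  ext y
  exact ⟨fun h => ⟨⟨y, interior_subset h.1.2, h.2⟩, h.1.1, rfl⟩,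
    by rintro ⟨w, hw, rfl⟩; exact ⟨⟨hw, hZK hw⟩, w.2.2⟩⟩

theorem noCompactClopen_connectedComponentIn [LocallyCompactSpace E] [T2Space E]
    (h : NoCompactClopen F) (hF : IsClosed F) : NoCompactClopen (connectedComponentIn F x) := by
  intro O hO hc
  by_contra hne
  obtain ⟨y, hyO, hyD⟩ := nonempty_iff_ne_empty.2 hne
  have hsub : connectedComponentIn F x ⊆ O :=
    subset_of_isPreconnected_of_inter_eq isPreconnected_connectedComponentIn hO hc.isClosed
      (by rw [inter_left_comm, inter_self, inter_comm]) ⟨y, hyD, hyO⟩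
  rw [inter_eq_right.2 hsub, connectedComponentIn_eq hyD] at hc
  have hyF := connectedComponentIn_subset F x hyD
  obtain ⟨U, hU, hyU, hUc⟩ := exists_isOpen_isCompact_inter hF hyF hc
  exact (h U hU hUc).subset ⟨hyU, hyF⟩

lemma exists_mem_connectedComponentIn_mem_frontier [LocallyConnectedSpace E] [PreconnectedSpace E]
    (hF : IsClosed F) (hF' : F ≠ univ) (hx : x ∈ F) :
    ∃ y ∈ connectedComponentIn F x, y ∈ frontier F := by
  by_contra! hfr
  have hint : connectedComponentIn F x ⊆ interior F := fun y hy =>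
    self_sdiff_frontier F ▸ ⟨connectedComponentIn_subset F x hy, hfr y hy⟩
  have hopen : connectedComponentIn F x = connectedComponentIn (interior F) x :=
    (isPreconnected_connectedComponentIn.subset_connectedComponentIn
      (mem_connectedComponentIn hx) hint).antisymm (connectedComponentIn_mono x interior_subset)
  have hclopen : IsClopen (connectedComponentIn F x) :=
    ⟨isClosed_connectedComponentIn hF, hopen ▸ isOpen_interior.connectedComponentIn⟩
  exact hF' (univ_subset_iff.1
    (hclopen.eq_univ ⟨x, mem_connectedComponentIn hx⟩ ▸ connectedComponentIn_subset F x))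

lemma frontier_connectedComponentIn_compl_subset [LocallyConnectedSpace E] (hG : IsClosed G) :
    frontier (connectedComponentIn Gᶜ z) ⊆ G := by
  intro q hq
  by_contra hqG
  obtain ⟨w, hwq, hwz⟩ := mem_closure_iff.1 hq.1 _ hG.isOpen_compl.connectedComponentIn
    (mem_connectedComponentIn hqG)
  have hqz : q ∈ connectedComponentIn Gᶜ z := by
    rw [connectedComponentIn_eq hwz, ← connectedComponentIn_eq hwq]
    exact mem_connectedComponentIn hqG
  exact hq.2 (hG.isOpen_compl.connectedComponentIn.interior_eq.symm ▸ hqz)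

/-- The component of the complement of `F` containing the base point `p`. For `p` far away from `F`
it plays the role of the component of infinity, which need not exist for unbounded `F`. -/
def outerComp (p : E) (F : Set E) : Set E := connectedComponentIn Fᶜ p

/-- The filled hull of `F` relative to the base point `p`: the union of `F` with the components of
its complement that do not contain `p`. -/
def filledHull (p : E) (F : Set E) : Set E := (outerComp p F)ᶜ

lemma outerComp_subset_compl : outerComp p F ⊆ Fᶜ := connectedComponentIn_subset _ _

lemma subset_filledHull : F ⊆ filledHull p F := subset_compl_comm.1 outerComp_subset_compl

lemma mem_outerComp_self (hp : p ∉ F) : p ∈ outerComp p F := mem_connectedComponentIn hp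

lemma isPreconnected_outerComp : IsPreconnected (outerComp p F) :=
  isPreconnected_connectedComponentIn

lemma outerComp_mono (hFG : F ⊆ G) : outerComp p G ⊆ outerComp p F :=
  connectedComponentIn_mono p (compl_subset_compl.2 hFG)

lemma isOpen_outerComp [LocallyConnectedSpace E] (hF : IsClosed F) :
    IsOpen (outerComp p F) :=
  hF.isOpen_compl.connectedComponentIn

lemma isClosed_filledHull [LocallyConnectedSpace E] (hF : IsClosed F) :
    IsClosed (filledHull p F) :=
  (isOpen_outerComp hF).isClosed_compl

lemma connectedComponentIn_compl_eq_univ [LocallyConnectedSpace E] [PreconnectedSpace E]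
    (hG : IsClosed G) (hz : z ∉ G) (hfr : frontier (connectedComponentIn Gᶜ z) ⊆ Gᶜ) :
    connectedComponentIn Gᶜ z = univ := by
  have hempty : frontier (connectedComponentIn Gᶜ z) = ∅ :=
    subset_empty_iff.1 fun q hq => hfr hq (frontier_connectedComponentIn_compl_subset hG hq)
  exact (isClopen_iff_frontier_eq_empty.2 hempty).eq_univ ⟨z, mem_connectedComponentIn hz⟩

lemma mem_outerComp_of_mem (h : p ∈ connectedComponentIn Fᶜ z) (hz : z ∉ F) :
    z ∈ outerComp p F := by
  rw [outerComp, ← connectedComponentIn_eq h]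
  exact mem_connectedComponentIn hz

lemma connectedComponentIn_compl_subset_compl (hG : G ⊆ outerComp p F) (hz : z ∉ F)
    (hz' : z ∉ outerComp p F) : connectedComponentIn Fᶜ z ⊆ Gᶜ := fun w hw hwG => by
  refine hz' ?_
  rw [outerComp, connectedComponentIn_eq (hG hwG), ← connectedComponentIn_eq hw]
  exact mem_connectedComponentIn hz

lemma subset_outerComp_of_isPreconnected_compl_union [LocallyConnectedSpace E]
    [PreconnectedSpace E] (hF : IsClosed F) (hG : IsClosed G) (hFG : Disjoint F G)
    (hpre : IsPreconnected (F ∪ G)ᶜ) (hp : p ∉ F ∪ G) : F ⊆ outerComp p G := by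
  intro z hz
  have hzG : z ∉ G := disjoint_left.1 hFG hz
  by_contra hzp
  have hsub : connectedComponentIn Gᶜ z ⊆ F := fun w hw => by
    by_contra hwF
    have hw' : w ∈ (F ∪ G)ᶜ := not_or.2 ⟨hwF, connectedComponentIn_subset _ _ hw⟩
    refine hzp (mem_outerComp_of_mem ?_ hzG)
    rw [connectedComponentIn_eq hw]
    exact hpre.subset_connectedComponentIn hw' (compl_subset_compl.2 subset_union_right) hp
  have huniv : connectedComponentIn Gᶜ z = univ :=
    connectedComponentIn_compl_eq_univ hG hzG fun q hq =>
      disjoint_left.1 hFG (closure_minimal hsub hF hq.1)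
  exact hp (Or.inl (hsub (huniv ▸ mem_univ p)))

theorem disjoint_filledHull [LocallyConnectedSpace E] [PreconnectedSpace E] (hF : IsClosed F)
    (hG : IsClosed G) (hFG : F ⊆ outerComp p G) (hGF : G ⊆ outerComp p F) :
    Disjoint (filledHull p F) (filledHull p G) := by
  refine disjoint_left.2 fun z hzF hzG => ?_
  have hzF' : z ∉ F := fun h => hzG (hFG h)
  have hzG' : z ∉ G := fun h => hzF (hGF h)
  have heq : connectedComponentIn Fᶜ z = connectedComponentIn Gᶜ z :=
    Subset.antisymm
      (isPreconnected_connectedComponentIn.subset_connectedComponentIn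
        (mem_connectedComponentIn hzF') (connectedComponentIn_compl_subset_compl hGF hzF' hzF))
      (isPreconnected_connectedComponentIn.subset_connectedComponentIn
        (mem_connectedComponentIn hzG') (connectedComponentIn_compl_subset_compl hFG hzG' hzG))
  have huniv : connectedComponentIn Fᶜ z = univ :=
    connectedComponentIn_compl_eq_univ hF hzF' fun q hq hqF =>
      outerComp_subset_compl (hFG hqF)
        (frontier_connectedComponentIn_compl_subset hG (heq ▸ hq))
  exact hzF (mem_outerComp_of_mem (huniv ▸ mem_univ p) hzF')

lemma biUnion_connectedComponentIn_filledHull_union [LocallyConnectedSpace E]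
    [PreconnectedSpace E] (hF : IsClosed F) (hG : IsClosed G) (hp : p ∉ F)
    (hFG : Disjoint (filledHull p F) G) :
    ⋃ a ∈ F, connectedComponentIn (filledHull p F ∪ G) a = filledHull p F := by
  refine (iUnion₂_subset fun a ha => connectedComponentIn_union_subset (isClosed_filledHull hF) hG
    hFG (subset_filledHull ha)).antisymm fun x hx => ?_
  obtain ⟨y, hyx, hy⟩ := exists_mem_connectedComponentIn_mem_frontier (isClosed_filledHull hF)
    (fun h => (h ▸ mem_univ p : p ∈ filledHull p F) (mem_outerComp_self hp)) hx
  rw [filledHull, frontier_compl] at hy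
  refine mem_biUnion (frontier_connectedComponentIn_compl_subset hF hy)
    (connectedComponentIn_mono y subset_union_left ?_)
  rw [← connectedComponentIn_eq hyx]
  exact mem_connectedComponentIn hx

end Components

/-! ### Logarithms of `(z - w) / (p - w)` and separation of the plane -/

section RatioLog

lemma tendsto_sub_div_sub {α : Type*} {l : Filter α} {f g : α → ℂ} (z : ℂ)
    (hf : l.IsBoundedUnder (· ≤ ·) (norm ∘ f)) (hg : Tendsto g l (cocompact ℂ)) :
    Tendsto (fun x => (f x - g x) / (z - g x)) l (𝓝 1) := by
  have hsub : Tendsto (fun x => z - g x) l (Bornology.cobounded ℂ) := by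
    rw [Metric.cobounded_eq_cocompact]
    exact (Homeomorph.subLeft z).isClosedEmbedding.tendsto_cocompact.comp hg
  have hbdd : l.IsBoundedUnder (· ≤ ·) (norm ∘ fun x => f x - z) := by
    obtain ⟨C, hC⟩ := hf
    refine ⟨C + ‖z‖, eventually_map.2 ((eventually_map.1 hC).mono fun x hx => ?_)⟩
    exact (norm_sub_le _ _).trans (add_le_add_left hx _)
  have hlim : Tendsto (fun x => 1 + (z - g x)⁻¹ * (f x - z)) l (𝓝 1) := by
    simpa using ((tendsto_inv₀_cobounded.comp hsub).zero_mul_isBoundedUnder_le hbdd).const_add 1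
  refine hlim.congr' ?_
  filter_upwards [hg (isCompact_singleton (x := z)).compl_mem_cocompact] with x hx
  have hzx : z - g x ≠ 0 := sub_ne_zero.2 (Ne.symm hx)
  field_simp
  ring

lemma tendsto_sub_div_sub_cocompact (z z' : ℂ) :
    Tendsto (fun w : ℂ => (z' - w) / (z - w)) (cocompact ℂ) (𝓝 1) :=
  tendsto_sub_div_sub z isBoundedUnder_const tendsto_id

lemma re_sub_div_sub_pos {z z' w : ℂ} (h : ‖z' - z‖ ≤ ‖z - w‖) (hz : z ≠ w) (hz' : z' ≠ w) :
    0 < ((z' - w) / (z - w)).re := by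
  have hzw : z - w ≠ 0 := sub_ne_zero.2 hz
  set q := (z' - z) / (z - w) with hq
  have heq : (z' - w) / (z - w) = 1 + q := by rw [hq]; field_simp; ring
  have hle : ‖q‖ ≤ 1 := by
    rw [hq, norm_div]
    exact div_le_one_of_le₀ h (norm_nonneg _)
  have hne : q ≠ -1 := fun hq1 => div_ne_zero (sub_ne_zero.2 hz') hzw (by rw [heq, hq1]; ring)
  rw [heq, Complex.add_re, Complex.one_re]
  by_contra! hre
  have hre1 : q.re = -1 := by linarith [(abs_le.1 ((Complex.abs_re_le_norm q).trans hle)).1]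
  have him : q.im = 0 := Complex.abs_re_eq_norm.1
    ((Complex.abs_re_le_norm q).antisymm (hle.trans (by simp [hre1])))
  exact hne (Complex.ext (by simp [hre1]) (by simp [him]))

/-- `u` is a continuous logarithm on `F` of `w ↦ (z - w) / (p - w)` that vanishes at infinity; for
compact `F` this is a branch of `log (z - w)` normalised by a branch of `log (p - w)`. -/
structure IsRatioLog (p : ℂ) (F : Set ℂ) (z : ℂ) (u : ℂ → ℂ) : Prop where
  continuousOn : ContinuousOn u F
  exp_eq : ∀ w ∈ F, Complex.exp (u w) = (z - w) / (p - w)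
  tendsto : Tendsto u (cocompact ℂ ⊓ 𝓟 F) (𝓝 0)

namespace IsRatioLog

variable {p z z' : ℂ} {F G : Set ℂ} {u v : ℂ → ℂ}

lemma base (hp : p ∉ F) : IsRatioLog p F p 0 where
  continuousOn := continuousOn_const
  exp_eq w hw := by
    have hpw : p - w ≠ 0 := sub_ne_zero.2 fun h => hp (h ▸ hw)
    simp [div_self hpw]
  tendsto := tendsto_const_nhds

lemma ne_zero (hu : IsRatioLog p F z u) {w : ℂ} (hw : w ∈ F) : z - w ≠ 0 ∧ p - w ≠ 0 :=
  div_ne_zero_iff.1 (hu.exp_eq w hw ▸ Complex.exp_ne_zero _)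

lemma notMem (hu : IsRatioLog p F z u) : z ∉ F := fun hz => (hu.ne_zero hz).1 (sub_self z)

lemma mono (hu : IsRatioLog p G z u) (hFG : F ⊆ G) : IsRatioLog p F z u where
  continuousOn := hu.continuousOn.mono hFG
  exp_eq w hw := hu.exp_eq w (hFG hw)
  tendsto := hu.tendsto.mono_left (inf_le_inf_left _ (principal_mono.2 hFG))

lemma add_log (hu : IsRatioLog p F z u) (hslit : ∀ w ∈ F, (z' - w) / (z - w) ∈ Complex.slitPlane) :
    IsRatioLog p F z' fun w => u w + Complex.log ((z' - w) / (z - w)) where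
  continuousOn := hu.continuousOn.add <| ContinuousOn.clog
    ((continuousOn_const.sub continuousOn_id).div (continuousOn_const.sub continuousOn_id)
      fun _ hw => (hu.ne_zero hw).1) hslit
  exp_eq w hw := by
    obtain ⟨hzw, hpw⟩ := hu.ne_zero hw
    rw [Complex.exp_add, hu.exp_eq w hw, Complex.exp_log (Complex.slitPlane_ne_zero (hslit w hw))]
    field_simp
  tendsto := by
    have hlog := (continuousAt_clog Complex.one_mem_slitPlane).tendsto.comp
      (tendsto_sub_div_sub_cocompact z z')
    rw [Complex.log_one] at hlog
    simpa using hu.tendsto.add (hlog.mono_left inf_le_left)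

lemma add_log_of_norm_le (hu : IsRatioLog p F z u) (h : ∀ w ∈ F, ‖z' - z‖ ≤ ‖z - w‖)
    (hz' : z' ∉ F) : IsRatioLog p F z' fun w => u w + Complex.log ((z' - w) / (z - w)) :=
  hu.add_log fun w hw => Or.inl <| re_sub_div_sub_pos (h w hw)
    (fun hzw => hu.notMem (hzw ▸ hw)) fun hzw => hz' (hzw ▸ hw)

lemma union (hu : IsRatioLog p F z u) (hv : IsRatioLog p G z v) (hF : IsClosed F) (hG : IsClosed G)
    (hFG : Disjoint F G) : ∃ f, IsRatioLog p (F ∪ G) z f := by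
  classical
  have hfu : EqOn (F.piecewise u v) u F := piecewise_eqOn _ _ _
  have hfv : EqOn (F.piecewise u v) v G :=
    (piecewise_eqOn_compl _ _ _).mono hFG.subset_compl_left
  refine ⟨F.piecewise u v, ?_, ?_, ?_⟩
  · exact (hu.continuousOn.congr hfu).union_of_isClosed (hv.continuousOn.congr hfv) hF hG
  · rintro w (hw | hw)
    · rw [hfu hw, hu.exp_eq w hw]
    · rw [hfv hw, hv.exp_eq w hw]
  · rw [← sup_principal, inf_sup_left, tendsto_sup]
    exact ⟨hu.tendsto.congr' (hfu.symm.eventuallyEq.filter_mono inf_le_right),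
      hv.tendsto.congr' (hfv.symm.eventuallyEq.filter_mono inf_le_right)⟩

end IsRatioLog

lemma eq_zero_of_exp_eq_one_of_norm_lt {a : ℂ} (ha : Complex.exp a = 1) (hlt : ‖a‖ < 1) :
    a = 0 := by
  have him : |a.im| < Real.pi :=
    (Complex.abs_im_le_norm a).trans_lt (hlt.trans (by linarith [Real.pi_gt_three]))
  rw [← Complex.log_exp (neg_lt_of_abs_lt him) (lt_of_abs_lt him).le, ha, Complex.log_one]

lemma eqOn_zero_of_exp_eq_one {E : Type*} [TopologicalSpace E] {F : Set E}
    (hNC : NoCompactClopen F) (hF : IsClosed F) {g : E → ℂ} (hg : ContinuousOn g F)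
    (h1 : ∀ w ∈ F, Complex.exp (g w) = 1) (ht : Tendsto g (cocompact E ⊓ 𝓟 F) (𝓝 0)) :
    EqOn g 0 F := by
  have hiff : F ∩ g ⁻¹' {0}ᶜ = F ∩ g ⁻¹' (ball 0 1)ᶜ := by
    ext w
    refine and_congr_right fun hw => not_congr ⟨fun h => ?_, fun h => ?_⟩
    · simp [mem_singleton_iff.1 h]
    · exact eq_zero_of_exp_eq_one_of_norm_lt (h1 w hw) (mem_ball_zero_iff.1 h)
  obtain ⟨Q, hQ, hQg⟩ := mem_cocompact.1
    (mem_inf_principal.1 (ht (ball_mem_nhds (0 : ℂ) one_pos)))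
  have hclosed : IsClosed (F ∩ g ⁻¹' (ball 0 1)ᶜ) :=
    hg.preimage_isClosed_of_isClosed hF isOpen_ball.isClosed_compl
  obtain ⟨O, hO, hOF⟩ := continuousOn_iff'.1 hg {0}ᶜ isOpen_compl_singleton
  rw [inter_comm, hiff, inter_comm] at hOF
  rw [inter_comm] at hclosed
  have hcompact : IsCompact (g ⁻¹' (ball 0 1)ᶜ ∩ F) :=
    hQ.of_isClosed_subset hclosed fun w hw => by_contra fun hwQ => hw.1 (hQg hwQ hw.2)
  have hempty : F ∩ g ⁻¹' {0}ᶜ = ∅ := by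
    rw [hiff, inter_comm, hOF]
    exact hNC O hO (hOF ▸ hcompact)
  exact fun w hw => by_contra fun hne => hempty.subset ⟨hw, hne⟩

lemma IsRatioLog.eqOn {p z : ℂ} {F : Set ℂ} {u v : ℂ → ℂ} (hu : IsRatioLog p F z u)
    (hv : IsRatioLog p F z v) (hNC : NoCompactClopen F) (hF : IsClosed F) : EqOn u v F := by
  have hdiff : EqOn (fun w => u w - v w) 0 F :=
    eqOn_zero_of_exp_eq_one hNC hF (hu.continuousOn.sub hv.continuousOn)
      (fun w hw => by
        rw [Complex.exp_sub, hu.exp_eq w hw, ← hv.exp_eq w hw, div_self (Complex.exp_ne_zero _)])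
      (by simpa using hu.tendsto.sub hv.tendsto)
  exact fun w hw => sub_eq_zero.1 (hdiff hw)

/-- The Tietze extension theorem applied in the one-point compactification. -/
lemma exists_continuous_eqOn_tendsto_zero {E : Type*} [TopologicalSpace E] [T2Space E]
    [LocallyCompactSpace E] {F : Set E} (hF : IsClosed F) {u : E → ℂ} (hu : ContinuousOn u F)
    (ht : Tendsto u (cocompact E ⊓ 𝓟 F) (𝓝 0)) :
    ∃ v : E → ℂ, Continuous v ∧ EqOn v u F ∧ Tendsto v (cocompact E) (𝓝 0) := by
  have hval : Tendsto (Subtype.val : F → E) (cocompact F) (cocompact E) :=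
    hF.isClosedEmbedding_subtypeVal.tendsto_cocompact
  have hemb : IsClosedEmbedding (OnePoint.map (Subtype.val : F → E)) :=
    (OnePoint.continuous_map continuous_subtype_val
      (by simpa only [coclosedCompact_eq_cocompact] using hval)).isClosedEmbedding
      (Option.map_injective Subtype.val_injective)
  have hlim : Tendsto (F.domRestrict u) (coclosedCompact F) (𝓝 0) := by
    rw [coclosedCompact_eq_cocompact]
    exact ht.comp (tendsto_inf.2 ⟨hval, tendsto_principal.2 (Eventually.of_forall fun w => w.2)⟩)
  obtain ⟨v, hv⟩ := (OnePoint.continuousMapMk ⟨F.domRestrict u, hu.domRestrict⟩ 0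
    hlim).exists_extension' hemb
  have hv_infty : v OnePoint.infty = 0 := congrFun hv OnePoint.infty
  obtain ⟨hv0, hvc⟩ := (OnePoint.continuous_iff v).1 v.continuous
  refine ⟨fun w => v w, hvc, fun w hw => congrFun hv (↑(⟨w, hw⟩ : F)), ?_⟩
  rwa [coclosedCompact_eq_cocompact, hv_infty] at hv0

/-- Otherwise `Φ` has a continuous logarithm, which near infinity yields one of `p - q`; but `p - q`
winds once around `0` along large circles. -/
lemma exists_eq_zero_of_tendsto_div {Φ : ℂ → ℂ} (hΦ : Continuous Φ) {p : ℂ}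
    (ht : Tendsto (fun q => Φ q / (p - q)) (cocompact ℂ) (𝓝 1)) : ∃ q, Φ q = 0 := by
  by_contra! h0
  obtain ⟨L, hL, hLΦ⟩ := exists_continuous_exp_eq hΦ h0
  obtain ⟨r, hr⟩ := closedBall_compl_subset_of_mem_cocompact
    (ht (Complex.isOpen_slitPlane.mem_nhds Complex.one_mem_slitPlane)) p
  obtain ⟨R, hR0, hrR⟩ : ∃ R : ℝ, 0 < R ∧ r < R := ⟨max r 0 + 1, by positivity, by
    linarith [le_max_left r 0]⟩
  let c : ℝ → ℂ := fun θ => p - R * Complex.exp (θ * Complex.I)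
  have hpc : ∀ θ, p - c θ = R * Complex.exp (θ * Complex.I) := fun θ => sub_sub_cancel _ _
  have hpc0 : ∀ θ, p - c θ ≠ 0 := fun θ => by simp [hpc, hR0.ne']
  have hslit : ∀ θ, Φ (c θ) / (p - c θ) ∈ Complex.slitPlane := fun θ => hr <| by
    simp [c, Complex.norm_exp_ofReal_mul_I, abs_of_pos hR0, hrR]
  let f : ℝ → ℂ := fun θ => L (c θ) - Complex.log (Φ (c θ) / (p - c θ))
  let g : ℝ → ℂ := fun θ => Complex.log R + θ * Complex.I
  have hc : Continuous c := by fun_prop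
  have hf : Continuous f := (hL.comp hc).sub
    (((hΦ.comp hc).div (continuous_const.sub hc) hpc0).clog hslit)
  have hg : Continuous g := by fun_prop
  have hfg : EqOn (Complex.exp ∘ f) (Complex.exp ∘ g) univ := fun θ _ => by
    have hlog := Complex.exp_log (Complex.slitPlane_ne_zero (hslit θ))
    have hlogR := Complex.exp_log (Complex.ofReal_ne_zero.2 hR0.ne')
    simp only [Function.comp_apply, f, g, Complex.exp_sub, Complex.exp_add, hLΦ, hlog, hlogR]
    rw [div_div_cancel₀ (h0 (c θ)), hpc]
  have hconst := sub_eq_sub_of_eqOn_exp_comp isPreconnected_univ hf.continuousOn hg.continuousOn hfg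
    (mem_univ (2 * Real.pi)) (mem_univ 0)
  have hperiod : f (2 * Real.pi) = f 0 := by simp [f, c]
  rw [hperiod] at hconst
  simp [g] at hconst

lemma IsRatioLog.mem_outerComp {p z : ℂ} {F : Set ℂ} {u : ℂ → ℂ} (hu : IsRatioLog p F z u)
    (hF : IsClosed F) : z ∈ outerComp p F := by
  classical
  obtain ⟨v, hvc, hvu, hv0⟩ := exists_continuous_eqOn_tendsto_zero hF hu.continuousOn hu.tendsto
  set V := connectedComponentIn Fᶜ z
  have hzV : z ∈ V := mem_connectedComponentIn hu.notMem
  suffices hpV : p ∈ V from mem_outerComp_of_mem hpV hu.notMem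
  by_contra hpV
  let Φ : ℂ → ℂ := V.piecewise (fun q => Complex.exp (v q) * (p - q)) fun q => z - q
  have hΦ : Continuous Φ := by
    refine Continuous.piecewise (fun q hq => ?_) (by fun_prop) (by fun_prop)
    have hqF : q ∈ F := frontier_connectedComponentIn_compl_subset hF hq
    rw [hvu hqF, hu.exp_eq q hqF, div_mul_cancel₀ _ (hu.ne_zero hqF).2]
  have hlim : Tendsto (fun q => Φ q / (p - q)) (cocompact ℂ) (𝓝 1) := by
    have hexp : Tendsto (fun q => Complex.exp (v q)) (cocompact ℂ) (𝓝 1) :=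
      Complex.exp_zero ▸ (Complex.continuous_exp.tendsto 0).comp hv0
    refine (Tendsto.piecewise (s := V) (hexp.mono_left inf_le_left)
      ((tendsto_sub_div_sub_cocompact p z).mono_left inf_le_left)).congr' ?_
    filter_upwards [(isCompact_singleton (x := p)).compl_mem_cocompact] with q hq
    by_cases hqV : q ∈ V
    · simp [Φ, hqV, sub_ne_zero.2 (Ne.symm hq)]
    · simp [Φ, hqV]
  obtain ⟨q, hq⟩ := exists_eq_zero_of_tendsto_div hΦ hlim
  by_cases hqV : q ∈ V
  · rw [show Φ q = _ from piecewise_eq_of_mem _ _ _ hqV, mul_eq_zero, sub_eq_zero] at hq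
    exact hpV (hq.resolve_left (Complex.exp_ne_zero _) ▸ hqV)
  · rw [show Φ q = _ from piecewise_eq_of_notMem _ _ _ hqV, sub_eq_zero] at hq
    exact hqV (hq ▸ hzV)

lemma exists_isRatioLog_of_mem_outerComp {p z : ℂ} {F : Set ℂ} (hF : IsClosed F)
    (hz : z ∈ outerComp p F) : ∃ u, IsRatioLog p F z u := by
  let T : Set ℂ := {z | ∃ u, IsRatioLog p F z u}
  have hlocal : ∀ z ∈ Fᶜ, ∀ᶠ z' in 𝓝 z, z' ∈ T ↔ z ∈ T := fun z hz => by
    obtain ⟨r, hr, hball⟩ := Metric.isOpen_iff.1 hF.isOpen_compl z hz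
    have hfar : ∀ w ∈ F, r ≤ ‖z - w‖ := fun w hw => by
      by_contra! hlt
      exact hball (mem_ball_iff_norm'.2 hlt) hw
    filter_upwards [ball_mem_nhds z (half_pos hr)] with z' hz'
    have hz'F : z' ∉ F := hball (ball_subset_ball (half_le_self hr.le) hz')
    have hzz' : ‖z' - z‖ < r / 2 := mem_ball_iff_norm.1 hz'
    refine ⟨fun ⟨u, hu⟩ => ⟨_, hu.add_log_of_norm_le (fun w hw => ?_) hz⟩,
      fun ⟨u, hu⟩ => ⟨_, hu.add_log_of_norm_le (fun w hw => ?_) hz'F⟩⟩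
    · have htri : ‖z - w‖ ≤ ‖z - z'‖ + ‖z' - w‖ := norm_sub_le_norm_sub_add_norm_sub _ _ _
      rw [norm_sub_rev z z'] at htri ⊢
      linarith [hfar w hw]
    · linarith [hfar w hw]
  have hTopen : IsOpen T := isOpen_iff_mem_nhds.2 fun z hz => by
    filter_upwards [hlocal z hz.choose_spec.notMem] with z' hz' using hz'.2 hz
  have hTclosed : outerComp p F ∩ T = outerComp p F ∩ closure T :=
    (inter_subset_inter_right _ subset_closure).antisymm fun z ⟨hzF, hzT⟩ => by
      obtain ⟨z', hz'T, hz'⟩ := ((mem_closure_iff_frequently.1 hzT).and_eventually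
        (hlocal z (outerComp_subset_compl hzF))).exists
      exact ⟨hzF, hz'.1 hz'T⟩
  have hp : p ∉ F := connectedComponentIn_nonempty_iff.1 ⟨z, hz⟩
  exact subset_of_isPreconnected_of_inter_eq isPreconnected_outerComp hTopen isClosed_closure
    hTclosed ⟨p, mem_outerComp_self hp, 0, .base hp⟩ hz

/-- Borsuk's separation criterion. -/
theorem exists_isRatioLog_iff {p z : ℂ} {F : Set ℂ} (hF : IsClosed F) :
    (∃ u, IsRatioLog p F z u) ↔ z ∈ outerComp p F :=
  ⟨fun ⟨_, hu⟩ => hu.mem_outerComp hF, exists_isRatioLog_of_mem_outerComp hF⟩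

/-- Janiszewski's theorem. -/
theorem outerComp_union {p : ℂ} {F G : Set ℂ} (hF : IsClosed F) (hG : IsClosed G)
    (hFG : Disjoint F G) : outerComp p (F ∪ G) = outerComp p F ∩ outerComp p G := by
  refine (subset_inter (outerComp_mono subset_union_left)
    (outerComp_mono subset_union_right)).antisymm fun z hz => ?_
  obtain ⟨⟨u, hu⟩, v, hv⟩ := And.imp (exists_isRatioLog_iff hF).2 (exists_isRatioLog_iff hG).2 hz
  exact (exists_isRatioLog_iff (hF.union hG)).1 (hu.union hv hF hG hFG)

theorem filledHull_union {p : ℂ} {F G : Set ℂ} (hF : IsClosed F) (hG : IsClosed G)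
    (hFG : Disjoint F G) : filledHull p (F ∪ G) = filledHull p F ∪ filledHull p G := by
  rw [filledHull, outerComp_union hF hG hFG, compl_inter, filledHull, filledHull]

lemma exists_isRatioLog_continuousOn {p : ℂ} {F : Set ℂ} (hF : IsClosed F)
    (hNC : NoCompactClopen F) :
    ∃ L : ℂ → ℂ → ℂ, (∀ z ∈ outerComp p F, IsRatioLog p F z (L z)) ∧
      ∀ w ∈ F, ContinuousOn (fun z => L z w) (outerComp p F) := by
  choose! L hL using fun z (hz : z ∈ outerComp p F) => exists_isRatioLog_of_mem_outerComp hF hz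
  refine ⟨L, hL, fun w hw z hz => ContinuousAt.continuousWithinAt ?_⟩
  have hzw : z - w ≠ 0 := ((hL z hz).ne_zero hw).1
  have hlog : ContinuousAt (fun z' => L z w + Complex.log ((z' - w) / (z - w))) z := by
    refine continuousAt_const.add (ContinuousAt.clog (by fun_prop) ?_)
    rw [div_self hzw]
    exact Complex.one_mem_slitPlane
  refine hlog.congr ?_
  obtain ⟨r, hr, hball⟩ := Metric.isOpen_iff.1 (isOpen_outerComp hF) z hz
  filter_upwards [ball_mem_nhds z hr] with z' hz'
  refine ((hL z hz).add_log_of_norm_le (z' := z') (fun w' hw' => ?_)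
    (outerComp_subset_compl (hball hz'))).eqOn (hL z' (hball hz')) hNC hF hw
  by_contra! hlt
  exact outerComp_subset_compl
    (hball (mem_ball_iff_norm'.2 (hlt.trans (mem_ball_iff_norm.1 hz')))) hw'

end RatioLog

/-! ### Comparing arguments across two separated sets -/

section LogAbove

lemma log_div_of_re_pos {x y : ℂ} (hx : 0 < x.re) (hy : 0 < y.re) :
    Complex.log (x / y) = Complex.log x - Complex.log y := by
  have hx0 : x ≠ 0 := fun h => by simp [h] at hx
  have hy0 : y ≠ 0 := fun h => by simp [h] at hy
  have hargx := abs_lt.1 (Complex.abs_arg_lt_pi_div_two_iff.2 (Or.inl hx))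
  have hargy := abs_lt.1 (Complex.abs_arg_lt_pi_div_two_iff.2 (Or.inl hy))
  have hne : y.arg ≠ Real.pi := by linarith [Real.pi_pos]
  have hinv : y⁻¹.arg = -y.arg := by rw [Complex.arg_inv, if_neg hne]
  rw [div_eq_mul_inv, Complex.log_mul hx0 (inv_ne_zero hy0), Complex.log_inv y hne,
    sub_eq_add_neg]
  rw [hinv]
  constructor <;> linarith

lemma div_mem_slitPlane_of_re_pos {x y : ℂ} (hx : 0 < x.re) (hy : 0 < y.re) :
    x / y ∈ Complex.slitPlane := by
  have hx0 : x ≠ 0 := fun h => by simp [h] at hx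
  have hy0 : y ≠ 0 := fun h => by simp [h] at hy
  have hargx := abs_lt.1 (Complex.abs_arg_lt_pi_div_two_iff.2 (Or.inl hx))
  have hargy := abs_lt.1 (Complex.abs_arg_lt_pi_div_two_iff.2 (Or.inl hy))
  have harg : (x / y).arg = x.arg - y.arg := by
    simpa only [Complex.sub_im, Complex.log_im] using congrArg Complex.im (log_div_of_re_pos hx hy)
  exact Complex.mem_slitPlane_iff_arg.2 ⟨by rw [harg]; linarith, div_ne_zero hx0 hy0⟩

variable {p a b z : ℂ} {A B C F : Set ℂ} {u v : ℂ → ℂ}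

lemma IsRatioLog.exp_add_log (hu : IsRatioLog p F z u) {w : ℂ} (hw : w ∈ F) :
    Complex.exp (u w + Complex.log (p - w)) = z - w := by
  have hpw : p - w ≠ 0 := (hu.ne_zero hw).2
  rw [Complex.exp_add, hu.exp_eq w hw, Complex.exp_log hpw, div_mul_cancel₀ _ hpw]

lemma IsRatioLog.add_log_eq_log_of_re_lt (hv : IsRatioLog p C z v) (hNC : NoCompactClopen C)
    (hC : IsClosed C) (hz : ∀ w ∈ C, w.re < z.re) (hp : ∀ w ∈ C, w.re < p.re) (ha : a ∈ C) :
    v a + Complex.log (p - a) = Complex.log (z - a) := by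
  have hre : ∀ w ∈ C, 0 < (z - w).re ∧ 0 < (p - w).re := fun w hw =>
    ⟨by simpa using hz w hw, by simpa using hp w hw⟩
  have hbase : IsRatioLog p C p 0 := .base fun hpC => (hp p hpC).false
  have heq := hv.eqOn (hbase.add_log fun w hw =>
    div_mem_slitPlane_of_re_pos (hre w hw).1 (hre w hw).2) hNC hC ha
  simp [heq, log_div_of_re_pos (hre a ha).1 (hre a ha).2]

lemma log_eq_log_neg_add_pi_mul_I {x : ℂ} (hx : 0 < x.im) :
    Complex.log x = Complex.log (-x) + Real.pi * Complex.I := by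
  rw [Complex.log, Complex.log, norm_neg, Complex.arg_neg_eq_arg_sub_pi_of_im_pos hx]
  push_cast
  ring

lemma IsRatioLog.exists_add_log_eq_log_add_pi_mul_I (hu : IsRatioLog p F a u) (hp : 0 < p.im)
    (hF : Complex.ofReal '' Ici 0 ⊆ F) :
    ∃ x : ℝ, 0 ≤ x ∧ a.re < x ∧
      u x + Complex.log (p - x) = Complex.log (x - a) + Real.pi * Complex.I := by
  have hcocompact : Tendsto Complex.ofReal atTop (cocompact ℂ) :=
    Complex.isometry_ofReal.isClosedEmbedding.tendsto_cocompact.mono_left atTop_le_cocompact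
  have hray : Tendsto Complex.ofReal atTop (cocompact ℂ ⊓ 𝓟 F) :=
    tendsto_inf.2 ⟨hcocompact, tendsto_principal.2 <| by
      filter_upwards [eventually_ge_atTop 0] with x hx using hF ⟨x, hx, rfl⟩⟩
  have hlog : Tendsto (fun x : ℝ => Complex.log ((p - x) / (a - x))) atTop (𝓝 0) :=
    Complex.log_one ▸ (continuousAt_clog Complex.one_mem_slitPlane).tendsto.comp
      ((tendsto_sub_div_sub_cocompact a p).comp hcocompact)
  have hlim := (hu.tendsto.comp hray).add hlog
  rw [add_zero] at hlim
  obtain ⟨x, hsmall, hx0, hxa, hxp⟩ := ((hlim.eventually (ball_mem_nhds 0 one_pos)).and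
    ((eventually_ge_atTop 0).and ((eventually_gt_atTop a.re).and
      (eventually_gt_atTop p.re)))).exists
  refine ⟨x, hx0, hxa, ?_⟩
  obtain ⟨hax, hpx⟩ := hu.ne_zero (hF ⟨x, hx0, rfl⟩)
  have hexp : Complex.exp (u x + Complex.log ((p - x) / (a - x))) = 1 := by
    rw [Complex.exp_add, hu.exp_eq x (hF ⟨x, hx0, rfl⟩),
      Complex.exp_log (div_ne_zero hpx hax), div_mul_div_cancel₀ hpx, div_self hax]
  have hzero := eq_zero_of_exp_eq_one_of_norm_lt hexp (mem_ball_zero_iff.1 hsmall)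
  have hquot : Complex.log ((p - x) / (a - x)) = Complex.log (x - p) - Complex.log (x - a) := by
    rw [← neg_sub (x : ℂ) p, ← neg_sub (x : ℂ) a, neg_div_neg_eq]
    exact log_div_of_re_pos (by simpa using hxp) (by simpa using hxa)
  have hneg : Complex.log (p - x) = Complex.log (x - p) + Real.pi * Complex.I := by
    rw [log_eq_log_neg_add_pi_mul_I (by simpa using hp), neg_sub]
  linear_combination hzero - hquot + hneg

/-- Both sides are logarithms of `±(a - b)` that depend continuously on `b ∈ F`; they are compared
far out on the positive real axis. -/
lemma IsRatioLog.add_log_eq_of_ray_subset (hu : IsRatioLog p F a u) (hv : IsRatioLog p C b v)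
    (hNC : NoCompactClopen C) (hC : IsClosed C) (hCre : ∀ w ∈ C, w.re < 0)
    (hFpre : IsPreconnected F) (hray : Complex.ofReal '' Ici 0 ⊆ F)
    (hslit : ∀ w ∈ F, p - w ∈ Complex.slitPlane) (hpre : 0 ≤ p.re) (hpim : 0 < p.im)
    (hFC : Disjoint F C) (ha : a ∈ C) (hb : b ∈ F) :
    u b + Complex.log (p - b) = v a + Complex.log (p - a) + Real.pi * Complex.I := by
  have hCp : ∀ w ∈ C, w.re < p.re := fun w hw => (hCre w hw).trans_le hpre
  have houter : F ⊆ outerComp p C := by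
    have hhalf : {w : ℂ | 0 ≤ w.re} ⊆ Cᶜ := fun w hw hwC => (hCre w hwC).not_ge hw
    have hpre' : IsPreconnected (F ∪ {w : ℂ | 0 ≤ w.re}) :=
      hFpre.union 0 (hray ⟨0, self_mem_Ici, rfl⟩) (le_refl (0 : ℝ))
        (convex_halfSpace_re_ge 0).isPreconnected
    exact subset_union_left.trans (hpre'.subset_connectedComponentIn (Or.inr hpre)
      (union_subset hFC.subset_compl_right hhalf))
  obtain ⟨L, hL, hLc⟩ := exists_isRatioLog_continuousOn (p := p) hC hNC
  obtain ⟨x, hx0, -, hx⟩ := hu.exists_add_log_eq_log_add_pi_mul_I hpim hray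
  have hxF : (x : ℂ) ∈ F := hray ⟨x, hx0, rfl⟩
  have hxL := (hL x (houter hxF)).add_log_eq_log_of_re_lt hNC hC
    (fun w hw => by simpa using (hCre w hw).trans_le hx0) hCp ha
  rw [hv.eqOn (hL b (houter hb)) hNC hC ha]
  refine eq_add_pi_mul_I_of_exp_eq_neg hFpre (f := fun w => u w + Complex.log (p - w))
    (g := fun w => L w a + Complex.log (p - a)) ?_ ?_ (fun w hw => ?_) hxF ?_ hb
  · exact hu.continuousOn.add ((continuousOn_const.sub continuousOn_id).clog hslit)
  · exact ((hLc a ha).mono houter).add continuousOn_const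
  · rw [hu.exp_add_log hw, (hL w (houter hw)).exp_add_log ha, neg_sub]
  · rw [hx, hxL]

/-- An analytic form of "`A` lies above `B`" that isotopies preserve: neither set meets the hull of
the other, and for `a ∈ A` and `b ∈ B` the normalised logarithm of `a - b` exceeds that of `b - a`
by `πi`. -/
structure LogAbove (p : ℂ) (A B : Set ℂ) : Prop where
  left_subset : A ⊆ outerComp p B
  right_subset : B ⊆ outerComp p A
  add_log_eq : ∀ a ∈ A, ∀ b ∈ B, ∀ u v, IsRatioLog p B a u → IsRatioLog p A b v →
    u b + Complex.log (p - b) = v a + Complex.log (p - a) + Real.pi * Complex.I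

lemma isPreconnected_union_aboveRay {s : ℝ → ℂ} (hB : IsPreconnected B)
    (hs : ContinuousOn s (Icc 0 1)) (hs0 : s 0 ∈ B) (hs1 : s 1 = 0) :
    IsPreconnected (B ∪ AboveRay s) := by
  have hray : IsPreconnected (AboveRay s) := (isPreconnected_Icc.image s hs).union 0
    ⟨1, right_mem_Icc.2 zero_le_one, hs1⟩ ⟨0, self_mem_Ici, Complex.ofReal_zero⟩
    (isPreconnected_Ici.image _ Complex.continuous_ofReal.continuousOn)
  exact hB.union (s 0) hs0 (Or.inl ⟨0, left_mem_Icc.2 zero_le_one, rfl⟩) hray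

lemma isClosed_aboveRay {s : ℝ → ℂ} (hs : ContinuousOn s (Icc 0 1)) : IsClosed (AboveRay s) :=
  (isCompact_Icc.image_of_continuousOn hs).isClosed.union
    (Complex.isometry_ofReal.isClosedEmbedding.isClosedMap _ isClosed_Ici)

lemma LiesAbove.add_log_eq {C D : Set ℂ} (h : LiesAbove C D) (hC : IsClosed C) (hD : IsClosed D)
    (hNC : NoCompactClopen C) (hND : NoCompactClopen D) (hCre : ∀ w ∈ C, w.re < 0)
    (hDre : ∀ w ∈ D, w.re < 0) (hDpre : IsPreconnected D) (ha : a ∈ C) (hb : b ∈ D)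
    (hu : IsRatioLog (1 + 2 * Real.pi * Complex.I) D a u)
    (hv : IsRatioLog (1 + 2 * Real.pi * Complex.I) C b v) :
    u b + Complex.log (1 + 2 * Real.pi * Complex.I - b) =
      v a + Complex.log (1 + 2 * Real.pi * Complex.I - a) + Real.pi * Complex.I := by
  obtain ⟨s, ⟨hs, hsC, hs0, hs1⟩, -, hsub⟩ := h
  have hF : IsClosed (D ∪ AboveRay s) := hD.union (isClosed_aboveRay hs)
  obtain ⟨f, hf⟩ := exists_isRatioLog_of_mem_outerComp hF (hsub ha)
  rw [hu.eqOn (hf.mono subset_union_left) hND hD hb]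
  refine hf.add_log_eq_of_ray_subset hv hNC hC hCre (isPreconnected_union_aboveRay hDpre hs hs0 hs1)
    (subset_union_right.trans subset_union_right) (fun w hw => ?_) (by simp) (by simp [Real.pi_pos])
    (disjoint_compl_right.mono_right (hsub.trans outerComp_subset_compl)) ha (Or.inl hb)
  rcases hw with hw | ⟨t, ht, rfl⟩ | ⟨x, -, rfl⟩
  · exact Or.inl (by simpa using (hDre w hw).trans one_pos)
  · exact Or.inl (by simpa using (hsC t ht).1.trans_lt one_pos)
  · exact Or.inr (by simp [Real.pi_pos.ne'])

theorem LiesAboveSets.logAbove (h : LiesAboveSets A B) (hA : IsClosed A) (hB : IsClosed B)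
    (hAB : Disjoint A B) (hNA : NoCompactClopen A) (hNB : NoCompactClopen B)
    (hre : ∀ w ∈ A ∪ B, w.re < 0) (hpre : IsPreconnected (A ∪ B)ᶜ) :
    LogAbove (1 + 2 * Real.pi * Complex.I) A B where
  left_subset := by
    refine subset_outerComp_of_isPreconnected_compl_union hA hB hAB hpre fun hp => ?_
    have := hre _ hp
    norm_num at this
  right_subset := by
    rw [union_comm] at hre hpre
    refine subset_outerComp_of_isPreconnected_compl_union hB hA hAB.symm hpre fun hp => ?_
    have := hre _ hp
    norm_num at this
  add_log_eq a ha b hb u v hu hv := by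
    have hCA := connectedComponentIn_subset A a
    have hDB := connectedComponentIn_subset B b
    exact (h _ ⟨a, ha, rfl⟩ _ ⟨b, hb, rfl⟩).add_log_eq (isClosed_connectedComponentIn hA)
      (isClosed_connectedComponentIn hB) (noCompactClopen_connectedComponentIn hNA hA)
      (noCompactClopen_connectedComponentIn hNB hB) (fun w hw => hre w (Or.inl (hCA hw)))
      (fun w hw => hre w (Or.inr (hDB hw))) isPreconnected_connectedComponentIn
      (mem_connectedComponentIn ha) (mem_connectedComponentIn hb) (hu.mono hDB) (hv.mono hCA)

lemma LogAbove.mono {A' B' : Set ℂ} (h : LogAbove p A B) (hA : A' ⊆ A) (hB : B' ⊆ B)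
    (hNA : NoCompactClopen A') (hNB : NoCompactClopen B') (hAcl : IsClosed A) (hBcl : IsClosed B)
    (hA' : IsClosed A') (hB' : IsClosed B') : LogAbove p A' B' where
  left_subset := hA.trans (h.left_subset.trans (outerComp_mono hB))
  right_subset := hB.trans (h.right_subset.trans (outerComp_mono hA))
  add_log_eq a ha b hb u v hu hv := by
    obtain ⟨u', hu'⟩ := exists_isRatioLog_of_mem_outerComp hBcl (h.left_subset (hA ha))
    obtain ⟨v', hv'⟩ := exists_isRatioLog_of_mem_outerComp hAcl (h.right_subset (hB hb))
    rw [hu.eqOn (hu'.mono hB) hNB hB' hb, hv.eqOn (hv'.mono hA) hNA hA' ha]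
    exact h.add_log_eq a (hA ha) b (hB hb) u' v' hu' hv'

end LogAbove

/-! ### Non-interlacing of filled hulls -/

section NonInterlaced

lemma exists_disjoint_arcs {z : ℂ} {r : ℝ} (hr : r ≠ 0) {S T : Set ℂ} (hS : IsCompact S)
    (hT : IsCompact T) {α β : ℂ → ℝ} (hα : ContinuousOn α S) (hβ : ContinuousOn β T)
    (hαS : ∀ w ∈ S, circleMap z r (α w) = w) (hβT : ∀ w ∈ T, circleMap z r (β w) = w)
    (hαβ : ∀ a ∈ S, ∀ b ∈ T, β b - α a ∈ Ioo 0 (2 * Real.pi)) :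
    ∃ J J' : Set ℂ, J ⊆ sphere z |r| ∧ J' ⊆ sphere z |r| ∧ IsClosed J ∧ IsClosed J' ∧
      IsPreconnected J ∧ IsPreconnected J' ∧ Disjoint J J' ∧ S ⊆ J ∧ T ⊆ J' := by
  have hSr : S ⊆ sphere z |r| := fun w hw => hαS w hw ▸ circleMap_mem_sphere' z r (α w)
  have hTr : T ⊆ sphere z |r| := fun w hw => hβT w hw ▸ circleMap_mem_sphere' z r (β w)
  have hsphere : IsPreconnected (sphere z |r|) :=
    isPreconnected_sphere (by rw [Complex.rank_real_complex]; norm_num) z |r|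
  rcases S.eq_empty_or_nonempty with rfl | hSne
  · exact ⟨∅, sphere z |r|, empty_subset _, subset_rfl, isClosed_empty, isClosed_sphere,
      isPreconnected_empty, hsphere, disjoint_bot_left, empty_subset _, hTr⟩
  rcases T.eq_empty_or_nonempty with rfl | hTne
  · exact ⟨sphere z |r|, ∅, subset_rfl, empty_subset _, isClosed_sphere, isClosed_empty,
      hsphere, isPreconnected_empty, disjoint_bot_right, hSr, empty_subset _⟩
  obtain ⟨a₀, ha₀, hmin⟩ := hS.exists_isMinOn hSne hα
  obtain ⟨a₁, ha₁, hmax⟩ := hS.exists_isMaxOn hSne hα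
  obtain ⟨b₀, hb₀, hmin'⟩ := hT.exists_isMinOn hTne hβ
  obtain ⟨b₁, hb₁, hmax'⟩ := hT.exists_isMaxOn hTne hβ
  have harc (x y : ℝ) : circleMap z r '' Icc x y ⊆ sphere z |r| :=
    image_subset_iff.2 fun θ _ => circleMap_mem_sphere' z r θ
  have hclosed (x y : ℝ) : IsClosed (circleMap z r '' Icc x y) :=
    (isCompact_Icc.image (continuous_circleMap z r)).isClosed
  have hpre (x y : ℝ) : IsPreconnected (circleMap z r '' Icc x y) :=
    isPreconnected_Icc.image _ (continuous_circleMap z r).continuousOn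
  refine ⟨circleMap z r '' Icc (α a₀) (α a₁), circleMap z r '' Icc (β b₀) (β b₁), harc _ _,
    harc _ _, hclosed _ _, hclosed _ _, hpre _ _, hpre _ _, ?_,
    fun w hw => ⟨α w, ⟨hmin hw, hmax hw⟩, hαS w hw⟩,
    fun w hw => ⟨β w, ⟨hmin' hw, hmax' hw⟩, hβT w hw⟩⟩
  rw [Set.disjoint_left]
  rintro _ ⟨x, hx, rfl⟩ ⟨y, hy, hyx⟩
  have hlo : 0 < y - x := by linarith [hx.2, hy.1, (hαβ a₁ ha₁ b₀ hb₀).1]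
  have hhi : y - x < 2 * Real.pi := by linarith [hx.1, hy.2, (hαβ a₀ ha₀ b₁ hb₁).2]
  exact hlo.ne' (sub_eq_zero.2 (eq_of_circleMap_eq hr (abs_lt.2 ⟨by linarith, hhi⟩) hyx))

variable {p z a b : ℂ} {r : ℝ} {A B F : Set ℂ} {u v : ℂ → ℂ}

lemma filledHull_inter_sphere_subset (hF : IsClosed F) (hr : r ≠ 0)
    (hball : ball z r ⊆ outerComp p F) : filledHull p F ∩ sphere z r ⊆ F := fun q hq => by
  refine frontier_connectedComponentIn_compl_subset (z := p) hF ⟨closure_mono hball ?_, fun h => ?_⟩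
  · rw [closure_ball z hr]
    exact sphere_subset_closedBall hq.2
  · exact hq.1 (interior_subset h)

lemma IsRatioLog.abs_im_sub_im_lt (hu : IsRatioLog p F z u) (hv : IsRatioLog p F a v)
    (hNC : NoCompactClopen F) (hF : IsClosed F) (h : ∀ w ∈ F, ‖a - z‖ ≤ ‖z - w‖) (hb : b ∈ F) :
    |(v b).im - (u b).im| < Real.pi / 2 := by
  rw [hv.eqOn (hu.add_log_of_norm_le h hv.notMem) hNC hF hb, Complex.add_im,
    add_sub_cancel_left, Complex.log_im]
  exact Complex.abs_arg_lt_pi_div_two_iff.2 <| Or.inl <| re_sub_div_sub_pos (h b hb)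
    (fun hzb => hu.notMem (hzb ▸ hb)) fun hab => hv.notMem (hab ▸ hb)

lemma IsRatioLog.circleMap_im_add_log (hu : IsRatioLog p F z u) (hb : b ∈ F)
    (hbr : b ∈ sphere z r) : circleMap z (-r) (u b + Complex.log (p - b)).im = b := by
  have hexp := hu.exp_add_log hb
  have hnorm : Real.exp (u b + Complex.log (p - b)).re = r := by
    rw [← Complex.norm_exp, hexp, ← mem_sphere_iff_norm.1 hbr, norm_sub_rev]
  rw [circleMap, ← hnorm, Complex.ofReal_neg, Complex.ofReal_exp, neg_mul, ← Complex.exp_add,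
    Complex.re_add_im, hexp]
  ring

lemma IsRatioLog.continuousOn_im_add_log (hu : IsRatioLog p F z u)
    (hslit : ∀ w ∈ F, p - w ∈ Complex.slitPlane) :
    ContinuousOn (fun w => (u w + Complex.log (p - w)).im) F :=
  Complex.continuous_im.comp_continuousOn
    (hu.continuousOn.add ((continuousOn_const.sub continuousOn_id).clog hslit))

/-- Moving the centre `z` to `a` or to `b` changes the respective argument by less than `π / 2`. -/
lemma LogAbove.im_sub_im_mem_Ioo (h : LogAbove p A B) (hA : IsClosed A) (hB : IsClosed B)
    (hNA : NoCompactClopen A) (hNB : NoCompactClopen B) (hu : IsRatioLog p A z u)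
    (hv : IsRatioLog p B z v) (hr : ∀ w ∈ A ∪ B, r ≤ ‖z - w‖) (ha : a ∈ A ∩ sphere z r)
    (hb : b ∈ B ∩ sphere z r) :
    (v b + Complex.log (p - b)).im - (u a + Complex.log (p - a)).im ∈ Ioo 0 (2 * Real.pi) := by
  obtain ⟨v', hv'⟩ := exists_isRatioLog_of_mem_outerComp hB (h.left_subset ha.1)
  obtain ⟨u', hu'⟩ := exists_isRatioLog_of_mem_outerComp hA (h.right_subset hb.1)
  have heq := congrArg Complex.im (h.add_log_eq a ha.1 b hb.1 v' u' hv' hu')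
  have hv'v := abs_lt.1 (hv.abs_im_sub_im_lt hv' hNB hB
    (fun w hw => (mem_sphere_iff_norm.1 ha.2).trans_le (hr w (Or.inr hw))) hb.1)
  have hu'u := abs_lt.1 (hu.abs_im_sub_im_lt hu' hNA hA
    (fun w hw => (mem_sphere_iff_norm.1 hb.2).trans_le (hr w (Or.inl hw))) ha.1)
  simp only [Complex.add_im, Complex.im_ofReal_mul, Complex.I_im,
    mul_one] at heq ⊢
  constructor <;> linarith [hv'v.1, hv'v.2, hu'u.1, hu'u.2]

theorem LogAbove.nonInterlaced_filledHull (h : LogAbove p A B) (hA : IsClosed A) (hB : IsClosed B)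
    (hNA : NoCompactClopen A) (hNB : NoCompactClopen B)
    (hslit : ∀ w ∈ A ∪ B, p - w ∈ Complex.slitPlane) :
    NonInterlaced (filledHull p A) (filledHull p B) := by
  intro z hz
  set r := infDist z (filledHull p A ∪ filledHull p B)
  rcases (filledHull p A ∪ filledHull p B).eq_empty_or_nonempty with hempty | hne
  · obtain ⟨hA', hB'⟩ := union_empty_iff.1 hempty
    exact ⟨∅, ∅, empty_subset _, empty_subset _, isClosed_empty, isClosed_empty,
      isPreconnected_empty, isPreconnected_empty, disjoint_bot_left,
      hA' ▸ inter_subset_left, hB' ▸ inter_subset_left⟩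
  have hr : 0 < r := (((isClosed_filledHull hA).union
    (isClosed_filledHull hB)).notMem_iff_infDist_pos hne).1 hz
  have hball : ball z r ⊆ (filledHull p A ∪ filledHull p B)ᶜ :=
    disjoint_ball_infDist.subset_compl_right
  have hfar : ∀ w ∈ A ∪ B, r ≤ ‖z - w‖ := fun w hw => dist_eq_norm z w ▸ infDist_le_dist_of_mem
    (union_subset_union subset_filledHull subset_filledHull hw)
  obtain ⟨u, hu⟩ := exists_isRatioLog_of_mem_outerComp hA (not_not.1 (not_or.1 hz).1)
  obtain ⟨v, hv⟩ := exists_isRatioLog_of_mem_outerComp hB (not_not.1 (not_or.1 hz).2)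
  obtain ⟨J, J', hJ, hJ', hJc, hJc', hJp, hJp', hJJ', hAJ, hBJ'⟩ :=
    exists_disjoint_arcs (neg_ne_zero.2 hr.ne') ((isCompact_sphere z r).inter_left hA)
      ((isCompact_sphere z r).inter_left hB)
      ((hu.continuousOn_im_add_log fun w hw => hslit w (Or.inl hw)).mono inter_subset_left)
      ((hv.continuousOn_im_add_log fun w hw => hslit w (Or.inr hw)).mono inter_subset_left)
      (fun w hw => hu.circleMap_im_add_log hw.1 hw.2)
      (fun w hw => hv.circleMap_im_add_log hw.1 hw.2)
      fun a ha b hb => h.im_sub_im_mem_Ioo hA hB hNA hNB hu hv hfar ha hb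
  rw [abs_neg, abs_of_pos hr] at hJ hJ'
  have hA' : filledHull p A ∩ sphere z r ⊆ A := filledHull_inter_sphere_subset hA hr.ne'
    fun w hw => not_not.1 (not_or.1 (hball hw)).1
  have hB' : filledHull p B ∩ sphere z r ⊆ B := filledHull_inter_sphere_subset hB hr.ne'
    fun w hw => not_not.1 (not_or.1 (hball hw)).2
  exact ⟨J, J', hJ, hJ', hJc, hJc', hJp, hJp', hJJ',
    (subset_inter hA' inter_subset_right).trans hAJ,
    (subset_inter hB' inter_subset_right).trans hBJ'⟩

end NonInterlaced

/-! ### Proper isotopies -/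

section ProperIsotopy

lemma exists_continuousOn_exp_eq_homotopy {E : Type*} [TopologicalSpace E] {K : Set E}
    {ψ : E → ℝ → ℂ} {u : E → ℂ}
    (hψ : ContinuousOn (fun q : E × ℝ => ψ q.1 q.2) (K ×ˢ Icc 0 1))
    (hψ0 : ∀ w ∈ K, ∀ t ∈ Icc (0 : ℝ) 1, ψ w t ≠ 0) (hu : ContinuousOn u K)
    (huψ : ∀ w ∈ K, Complex.exp (u w) = ψ w 0) :
    ∃ L : E → ℝ → ℂ, ContinuousOn (fun q : E × ℝ => L q.1 q.2) (K ×ˢ Icc 0 1) ∧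
      (∀ w ∈ K, ∀ t ∈ Icc (0 : ℝ) 1, Complex.exp (L w t) = ψ w t) ∧ ∀ w ∈ K, L w 0 = u w := by
  classical
  let Ψ : C(unitInterval × K, {z : ℂ // z ≠ 0}) :=
    ⟨fun q => ⟨ψ q.2 q.1, hψ0 _ q.2.2 _ q.1.2⟩, Continuous.subtype_mk
      (hψ.comp_continuous (f := fun q : unitInterval × K => ((q.2 : E), (q.1 : ℝ)))
        (by fun_prop) fun q => ⟨q.2.2, q.1.2⟩) _⟩
  have hΨ0 : ∀ w : K, Ψ (0, w) = ⟨Complex.exp (u w), Complex.exp_ne_zero _⟩ :=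
    fun w => Subtype.ext (huψ w w.2).symm
  let G := Complex.isCoveringMap_exp.liftHomotopy Ψ ⟨K.domRestrict u, hu.domRestrict⟩ hΨ0
  have hG : ∀ q, Complex.exp (G q) = ψ q.2 q.1 := fun q =>
    congrArg Subtype.val (congrFun (Complex.isCoveringMap_exp.liftHomotopy_lifts Ψ _ hΨ0) q)
  let L : E → ℝ → ℂ := fun w t => if hw : w ∈ K then G (projIcc 0 1 zero_le_one t, ⟨w, hw⟩) else 0
  have hL : ∀ (w : K) (t : ℝ), L w t = G (projIcc 0 1 zero_le_one t, w) := fun w t => dif_pos w.2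
  refine ⟨L, ?_, fun w hw t ht => ?_, fun w hw => ?_⟩
  · rw [continuousOn_iff_continuous_domRestrict]
    have hcont : Continuous fun q : ↑(K ×ˢ Icc (0 : ℝ) 1) =>
        G (projIcc 0 1 zero_le_one q.1.2, ⟨q.1.1, q.2.1⟩) :=
      G.continuous.comp ((continuous_projIcc.comp (by fun_prop)).prodMk
        (Continuous.subtype_mk (by fun_prop) _))
    exact hcont.congr fun q => (hL ⟨q.1.1, q.2.1⟩ q.1.2).symm
  · rw [hL ⟨w, hw⟩ t, hG, projIcc_of_mem _ ht]
  · rw [hL ⟨w, hw⟩ 0, projIcc_left]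
    exact Complex.isCoveringMap_exp.liftHomotopy_zero Ψ _ hΨ0 ⟨w, hw⟩

lemma tendsto_zero_of_tendsto_exp_homotopy {α : Type*} {l : Filter α} {L : α → ℝ → ℂ}
    (hL : ∀ᶠ w in l, ContinuousOn (L w) (Icc 0 1))
    (h1 : Tendsto (fun q : α × ℝ => Complex.exp (L q.1 q.2)) (l ×ˢ 𝓟 (Icc 0 1)) (𝓝 1))
    (h0 : Tendsto (fun w => L w 0) l (𝓝 0)) {t : ℝ} (ht : t ∈ Icc (0 : ℝ) 1) :
    Tendsto (fun w => L w t) l (𝓝 0) := by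
  have hlog : Tendsto (fun w => Complex.log (Complex.exp (L w t))) l (𝓝 0) := by
    have ht1 := h1.comp (tendsto_id.prodMk (tendsto_principal.2 (Eventually.of_forall fun _ => ht)))
    exact Complex.log_one ▸ (continuousAt_clog Complex.one_mem_slitPlane).tendsto.comp ht1
  refine hlog.congr' ?_
  have hslit := eventually_prod_principal_iff.1
    (h1.eventually (Complex.isOpen_slitPlane.mem_nhds Complex.one_mem_slitPlane))
  filter_upwards [hL, hslit, h0.eventually (ball_mem_nhds 0 Real.pi_pos)] with w hw hslitw hw0
  have him := abs_lt.1 ((Complex.abs_im_le_norm _).trans_lt (mem_ball_zero_iff.1 hw0))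
  refine eqOn_of_eqOn_exp_comp isPreconnected_Icc (hw.cexp.clog hslitw) hw (fun _ _ => ?_)
    (left_mem_Icc.2 zero_le_one) (Complex.log_exp him.1 him.2.le) ht
  exact Complex.exp_log (Complex.exp_ne_zero _)

lemma isClosed_image_of_tendsto_cocompact {E E' : Type*} [TopologicalSpace E] [TopologicalSpace E']
    [T2Space E'] [WeaklyLocallyCompactSpace E'] {K : Set E} {f : E → E'} (hK : IsClosed K)
    (hf : ContinuousOn f K) (ht : Tendsto f (cocompact E ⊓ 𝓟 K) (cocompact E')) :
    IsClosed (f '' K) := by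
  rw [← range_domRestrict]
  have hval : Tendsto (Subtype.val : K → E) (cocompact K) (cocompact E ⊓ 𝓟 K) :=
    tendsto_inf.2 ⟨hK.isClosedEmbedding_subtypeVal.tendsto_cocompact,
      tendsto_principal.2 (Eventually.of_forall fun w => w.2)⟩
  have hproper := isProperMap_iff_tendsto_cocompact.2 ⟨hf.domRestrict, ht.comp hval⟩
  exact hproper.isClosedMap.isClosed_range

/-- An isotopy `H` of `K` starting at the identity, under which `H w t → ∞` as `w → ∞` in `K`,
uniformly in `t`. -/
structure IsProperIsotopy (K : Set ℂ) (H : ℂ → ℝ → ℂ) : Prop where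
  continuousOn : ContinuousOn (fun q : ℂ × ℝ => H q.1 q.2) (K ×ˢ Icc 0 1)
  injOn : ∀ t ∈ Icc (0 : ℝ) 1, InjOn (fun w => H w t) K
  apply_zero : ∀ w ∈ K, H w 0 = w
  tendsto : Tendsto (fun q : ℂ × ℝ => H q.1 q.2) ((cocompact ℂ ⊓ 𝓟 K) ×ˢ 𝓟 (Icc 0 1)) (cocompact ℂ)

namespace IsProperIsotopy

variable {p : ℂ} {K A B : Set ℂ} {H : ℂ → ℝ → ℂ} {t : ℝ}

lemma mono (hH : IsProperIsotopy K H) (hAK : A ⊆ K) : IsProperIsotopy A H where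
  continuousOn := hH.continuousOn.mono (prod_mono_left hAK)
  injOn t ht := (hH.injOn t ht).mono hAK
  apply_zero w hw := hH.apply_zero w (hAK hw)
  tendsto := hH.tendsto.mono_left
    (Filter.prod_mono_left _ (inf_le_inf_left _ (principal_mono.2 hAK)))

lemma image_zero (hH : IsProperIsotopy K H) : (fun w => H w 0) '' K = K :=
  (image_congr hH.apply_zero).trans (image_id K)

lemma continuousOn_left (hH : IsProperIsotopy K H) (ht : t ∈ Icc (0 : ℝ) 1) :
    ContinuousOn (fun w => H w t) K :=
  hH.continuousOn.comp (f := fun w : ℂ => (w, t)) (by fun_prop) fun _ hw => ⟨hw, ht⟩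

lemma continuousOn_right (hH : IsProperIsotopy K H) {w : ℂ} (hw : w ∈ K) :
    ContinuousOn (H w) (Icc 0 1) :=
  hH.continuousOn.comp (f := fun t : ℝ => (w, t)) (by fun_prop) fun _ ht => ⟨hw, ht⟩

lemma tendsto_left (hH : IsProperIsotopy K H) (ht : t ∈ Icc (0 : ℝ) 1) :
    Tendsto (fun w => H w t) (cocompact ℂ ⊓ 𝓟 K) (cocompact ℂ) :=
  hH.tendsto.comp (tendsto_id.prodMk (tendsto_principal.2 (Eventually.of_forall fun _ => ht)))

lemma isClosed_image (hH : IsProperIsotopy K H) (hK : IsClosed K) (ht : t ∈ Icc (0 : ℝ) 1) :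
    IsClosed ((fun w => H w t) '' K) :=
  isClosed_image_of_tendsto_cocompact hK (hH.continuousOn_left ht) (hH.tendsto_left ht)

lemma exists_leftInvOn (hH : IsProperIsotopy K H) (hK : IsClosed K) (ht : t ∈ Icc (0 : ℝ) 1) :
    ∃ g : ℂ → ℂ, LeftInvOn g (fun w => H w t) K ∧ ContinuousOn g ((fun w => H w t) '' K) ∧
      Tendsto g (cocompact ℂ ⊓ 𝓟 ((fun w => H w t) '' K)) (cocompact ℂ ⊓ 𝓟 K) := by
  let g := Function.invFunOn (fun w => H w t) K
  have hg : LeftInvOn g (fun w => H w t) K := (hH.injOn t ht).leftInvOn_invFunOn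
  refine ⟨g, hg, continuousOn_iff_isClosed.2 fun S hS => ?_, tendsto_inf.2 ⟨?_, ?_⟩⟩
  · refine ⟨_, (hH.mono inter_subset_right).isClosed_image (hS.inter hK) ht, ?_⟩
    rw [inter_eq_left.2 (image_mono inter_subset_right), hg.image_inter']
  · refine hasBasis_cocompact.tendsto_right_iff.2 fun Q hQ => mem_inf_principal.2 ?_
    filter_upwards [((hQ.inter_left hK).image_of_continuousOn
      ((hH.continuousOn_left ht).mono inter_subset_left)).compl_mem_cocompact]
    rintro _ hw ⟨w, hwK, rfl⟩ hwQ
    exact hw ⟨w, ⟨hwK, hg hwK ▸ hwQ⟩, rfl⟩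
  · refine tendsto_principal.2 (mem_inf_of_right ?_)
    rintro _ ⟨w, hw, rfl⟩
    exact (hg hw).symm.subst (motive := (· ∈ K)) hw

lemma noCompactClopen_image (hH : IsProperIsotopy K H) (hK : IsClosed K)
    (hNC : NoCompactClopen K) (ht : t ∈ Icc (0 : ℝ) 1) :
    NoCompactClopen ((fun w => H w t) '' K) := by
  obtain ⟨g, hg, hgc, -⟩ := hH.exists_leftInvOn hK ht
  intro O hO hcompact
  obtain ⟨O', hO', hOO'⟩ := continuousOn_iff'.1 (hH.continuousOn_left ht) O hO
  have himage : O ∩ (fun w => H w t) '' K = (fun w => H w t) '' (O' ∩ K) := by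
    rw [← hOO', image_preimage_inter]
  have hgimage : g '' (O ∩ (fun w => H w t) '' K) = O' ∩ K := by
    rw [himage, image_image]
    exact (image_congr fun w hw => hg hw.2).trans (image_id _)
  rw [himage, hNC O' hO' (hgimage ▸ hcompact.image_of_continuousOn (hgc.mono inter_subset_right)),
    image_empty]

lemma exists_isRatioLog (hH : IsProperIsotopy K H) (hK : IsClosed K)
    (hp : ∀ w ∈ K, ∀ t ∈ Icc (0 : ℝ) 1, p - H w t ≠ 0) {γ : ℝ → ℂ}
    (hγ : ContinuousOn γ (Icc 0 1)) (hγH : ∀ w ∈ K, ∀ t ∈ Icc (0 : ℝ) 1, γ t - H w t ≠ 0)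
    {u : ℂ → ℂ} (hu : IsRatioLog p K (γ 0) u) :
    ∃ L : ℂ → ℝ → ℂ, (∀ w ∈ K, ContinuousOn (L w) (Icc 0 1)) ∧
      ∀ t ∈ Icc (0 : ℝ) 1, ∃ v, IsRatioLog p ((fun w => H w t) '' K) (γ t) v ∧
        ∀ w ∈ K, v (H w t) = L w t := by
  have hγsnd : ContinuousOn (fun q : ℂ × ℝ => γ q.2) (K ×ˢ Icc 0 1) :=
    hγ.comp continuousOn_snd fun q hq => hq.2
  obtain ⟨L, hLc, hL, hL0⟩ := exists_continuousOn_exp_eq_homotopy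
    (ψ := fun w t => (γ t - H w t) / (p - H w t))
    ((hγsnd.sub hH.continuousOn).div (continuousOn_const.sub hH.continuousOn)
      fun q hq => hp _ hq.1 _ hq.2)
    (fun w hw t ht => div_ne_zero (hγH w hw t ht) (hp w hw t ht)) hu.continuousOn
    (fun w hw => by rw [hu.exp_eq w hw, hH.apply_zero w hw])
  have hLw : ∀ w ∈ K, ContinuousOn (L w) (Icc 0 1) := fun w hw =>
    hLc.comp (f := fun t : ℝ => (w, t)) (by fun_prop) fun _ ht => ⟨hw, ht⟩
  have hKmem : ∀ᶠ w in cocompact ℂ ⊓ 𝓟 K, w ∈ K := mem_inf_of_right (mem_principal_self K)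
  have hexp : Tendsto (fun q : ℂ × ℝ => Complex.exp (L q.1 q.2))
      ((cocompact ℂ ⊓ 𝓟 K) ×ˢ 𝓟 (Icc 0 1)) (𝓝 1) := by
    obtain ⟨C, hC⟩ := (isCompact_Icc.image_of_continuousOn hγ).isBounded.exists_norm_le
    refine (tendsto_sub_div_sub p (f := fun q => γ q.2) ⟨C, ?_⟩ hH.tendsto).congr' ?_
    · exact eventually_map.2 (eventually_prod_principal_iff.2 (Eventually.of_forall
        fun w t ht => hC _ (mem_image_of_mem γ ht)))
    · exact eventually_prod_principal_iff.2 (hKmem.mono fun w hw t ht => (hL w hw t ht).symm)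
  have h0 : Tendsto (fun w => L w 0) (cocompact ℂ ⊓ 𝓟 K) (𝓝 0) :=
    hu.tendsto.congr' (hKmem.mono fun w hw => (hL0 w hw).symm)
  refine ⟨L, hLw, fun t ht => ?_⟩
  obtain ⟨g, hg, hgc, hgt⟩ := hH.exists_leftInvOn hK ht
  refine ⟨fun w => L (g w) t, ⟨?_, ?_, ?_⟩, fun w hw => congrArg (L · t) (hg hw)⟩
  · refine hLc.comp (hgc.prodMk continuousOn_const) ?_
    rintro _ ⟨w, hw, rfl⟩
    exact ⟨(hg hw).symm.subst (motive := (· ∈ K)) hw, ht⟩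
  · rintro _ ⟨w, hw, rfl⟩
    exact (congrArg (fun x => Complex.exp (L x t)) (hg hw)).trans (hL w hw t ht)
  · exact (tendsto_zero_of_tendsto_exp_homotopy (hKmem.mono hLw) hexp h0 ht).comp hgt

lemma exists_continuousOn_eq_add_log (hH : IsProperIsotopy K H) (hBK : B ⊆ K) (hB : IsClosed B)
    (hslit : ∀ w ∈ B, ∀ t ∈ Icc (0 : ℝ) 1, p - H w t ∈ Complex.slitPlane) {a : ℂ} (ha : a ∈ K)
    (haB : a ∈ outerComp p B) :
    ∃ L : ℂ → ℝ → ℂ, (∀ b ∈ B, ContinuousOn (L b) (Icc 0 1)) ∧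
      ∀ t ∈ Icc (0 : ℝ) 1, ∃ v, IsRatioLog p ((fun w => H w t) '' B) (H a t) v ∧
        ∀ b ∈ B, L b t = v (H b t) + Complex.log (p - H b t) := by
  obtain ⟨u, hu⟩ := exists_isRatioLog_of_mem_outerComp hB haB
  obtain ⟨L, hLc, hL⟩ := (hH.mono hBK).exists_isRatioLog hB
    (fun w hw t ht => Complex.slitPlane_ne_zero (hslit w hw t ht)) (hH.continuousOn_right ha)
    (fun b hb t ht => sub_ne_zero.2 fun heq =>
      outerComp_subset_compl haB (hH.injOn t ht ha (hBK hb) heq ▸ hb))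
    ((hH.apply_zero a ha).symm ▸ hu)
  refine ⟨fun b t => L b t + Complex.log (p - H b t), fun b hb => (hLc b hb).add
    ((continuousOn_const.sub (hH.continuousOn_right (hBK hb))).clog (hslit b hb)), fun t ht => ?_⟩
  obtain ⟨v, hv, hvL⟩ := hL t ht
  exact ⟨v, hv, fun b hb => by rw [hvL b hb]⟩

lemma image_subset_outerComp (hH : IsProperIsotopy K H) (hAK : A ⊆ K) (hBK : B ⊆ K)
    (hB : IsClosed B) (hslit : ∀ w ∈ B, ∀ t ∈ Icc (0 : ℝ) 1, p - H w t ∈ Complex.slitPlane)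
    (hAB : A ⊆ outerComp p B) (ht : t ∈ Icc (0 : ℝ) 1) :
    (fun w => H w t) '' A ⊆ outerComp p ((fun w => H w t) '' B) := by
  rintro _ ⟨a, ha, rfl⟩
  obtain ⟨_, -, hL⟩ := hH.exists_continuousOn_eq_add_log hBK hB hslit (hAK ha) (hAB ha)
  obtain ⟨v, hv, -⟩ := hL t ht
  exact hv.mem_outerComp ((hH.mono hBK).isClosed_image hB ht)

/-- The two normalised logarithms of `±(H a t - H b t)` vary continuously with `t`, so they keep
differing by `πi`. -/
theorem logAbove (hH : IsProperIsotopy (A ∪ B) H) (h : LogAbove p A B) (hA : IsClosed A)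
    (hB : IsClosed B) (hNA : NoCompactClopen A) (hNB : NoCompactClopen B)
    (hslit : ∀ w ∈ A ∪ B, ∀ t ∈ Icc (0 : ℝ) 1, p - H w t ∈ Complex.slitPlane)
    (ht : t ∈ Icc (0 : ℝ) 1) :
    LogAbove p ((fun w => H w t) '' A) ((fun w => H w t) '' B) := by
  have hslitA := fun w hw => hslit w (Or.inl hw)
  have hslitB := fun w hw => hslit w (Or.inr hw)
  have hHA := hH.mono (subset_union_left : A ⊆ A ∪ B)
  have hHB := hH.mono (subset_union_right : B ⊆ A ∪ B)
  refine ⟨hH.image_subset_outerComp subset_union_left subset_union_right hB hslitB h.left_subset ht,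
    hH.image_subset_outerComp subset_union_right subset_union_left hA hslitA h.right_subset ht, ?_⟩
  rintro _ ⟨a, ha, rfl⟩ _ ⟨b, hb, rfl⟩ u v hu hv
  obtain ⟨L, hLc, hL⟩ := hH.exists_continuousOn_eq_add_log subset_union_right hB hslitB
    (Or.inl ha) (h.left_subset ha)
  obtain ⟨M, hMc, hM⟩ := hH.exists_continuousOn_eq_add_log subset_union_left hA hslitA
    (Or.inr hb) (h.right_subset hb)
  have hexp : ∀ s ∈ Icc (0 : ℝ) 1, Complex.exp (L b s) = -Complex.exp (M a s) := fun s hs => by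
    obtain ⟨u', hu', hLu'⟩ := hL s hs
    obtain ⟨v', hv', hMv'⟩ := hM s hs
    rw [hLu' b hb, hMv' a ha, hu'.exp_add_log ⟨b, hb, rfl⟩, hv'.exp_add_log ⟨a, ha, rfl⟩, neg_sub]
  have h01 : (0 : ℝ) ∈ Icc (0 : ℝ) 1 := left_mem_Icc.2 zero_le_one
  have hzero : L b 0 = M a 0 + Real.pi * Complex.I := by
    obtain ⟨u', hu', hLu'⟩ := hL 0 h01
    obtain ⟨v', hv', hMv'⟩ := hM 0 h01
    rw [hHB.image_zero, hHA.apply_zero a ha] at hu'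
    rw [hHA.image_zero, hHB.apply_zero b hb] at hv'
    rw [hLu' b hb, hMv' a ha, hHA.apply_zero a ha, hHB.apply_zero b hb]
    exact h.add_log_eq a ha b hb u' v' hu' hv'
  obtain ⟨u', hu', hLu'⟩ := hL t ht
  obtain ⟨v', hv', hMv'⟩ := hM t ht
  rw [hu.eqOn hu' (hHB.noCompactClopen_image hB hNB ht) (hHB.isClosed_image hB ht) ⟨b, hb, rfl⟩,
    hv.eqOn hv' (hHA.noCompactClopen_image hA hNA ht) (hHA.isClosed_image hA ht) ⟨a, ha, rfl⟩,
    ← hLu' b hb, ← hMv' a ha]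
  exact eq_add_pi_mul_I_of_exp_eq_neg isPreconnected_Icc (hLc b hb) (hMc a ha) hexp h01 hzero ht

end IsProperIsotopy

end ProperIsotopy

/-! ### Lifts through the exponential -/

section ExpPreimage

variable {K U Y : Set ℂ} {p z : ℂ}

lemma hatSet_eq_preimage_exp (Y : Set ℂ) : hatSet Y = Complex.exp ⁻¹' Y := by
  ext w
  exact and_iff_left (Complex.exp_ne_zero w)

lemma isClosed_hatSet (hY : IsClosed Y) : IsClosed (hatSet Y) :=
  hatSet_eq_preimage_exp Y ▸ hY.preimage Complex.continuous_exp

lemma re_neg_of_mem_hatSet (hY : Y ⊆ ball 0 1) (hz : z ∈ hatSet Y) : z.re < 0 := by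
  rw [hatSet_eq_preimage_exp] at hz
  have hball := hY hz
  rwa [mem_ball_zero_iff, Complex.norm_exp, Real.exp_lt_one_iff] at hball

/-- The image under `exp` of a compact clopen piece would be clopen in `Y` and miss `0`. -/
lemma noCompactClopen_hatSet (hY : IsPreconnected Y) (h0 : (0 : ℂ) ∈ Y) :
    NoCompactClopen (hatSet Y) := by
  intro O hO hcompact
  by_contra hne
  obtain ⟨q, hqO, hqY⟩ := nonempty_iff_ne_empty.2 hne
  have himage : Y ∩ Complex.exp '' O = Y ∩ Complex.exp '' (O ∩ hatSet Y) := by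
    rw [hatSet_eq_preimage_exp, image_inter_preimage, inter_comm _ Y, ← inter_assoc, inter_self]
  obtain ⟨w, -, hw⟩ := subset_of_isPreconnected_of_inter_eq hY (Complex.isOpenMap_exp O hO)
    (hcompact.image Complex.continuous_exp).isClosed himage ⟨_, hqY.1, q, hqO, rfl⟩ h0
  exact Complex.exp_ne_zero w hw

lemma one_le_norm_exp_iff : 1 ≤ ‖Complex.exp z‖ ↔ 0 ≤ z.re := by
  rw [Complex.norm_exp, Real.one_le_exp_iff]

lemma isPreconnected_setOf_one_le_norm : IsPreconnected {z : ℂ | 1 ≤ ‖z‖} := by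
  have himage : Complex.exp '' {z : ℂ | 0 ≤ z.re} = {z : ℂ | 1 ≤ ‖z‖} := by
    refine Subset.antisymm (image_subset_iff.2 fun w => one_le_norm_exp_iff.2) fun z hz => ?_
    have hexp := Complex.exp_log (norm_pos_iff.1 (zero_lt_one.trans_le hz))
    exact ⟨Complex.log z, one_le_norm_exp_iff.1 (hexp.symm ▸ hz), hexp⟩
  exact himage ▸
    (convex_halfSpace_re_ge 0).isPreconnected.image _ Complex.continuous_exp.continuousOn

/-- A path in `U` to `1` lifts to a path ending on the imaginary axis. -/
lemma isPreconnected_preimage_exp (hU : IsOpen U) (hc : IsPreconnected U)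
    (h1 : {z : ℂ | 1 ≤ ‖z‖} ⊆ U) (h0 : (0 : ℂ) ∉ U) : IsPreconnected (Complex.exp ⁻¹' U) := by
  have hone : (1 : ℂ) ∈ U := h1 norm_one.ge
  have hpath : IsPathConnected U := hU.isConnected_iff_isPathConnected.1 ⟨⟨1, hone⟩, hc⟩
  refine isPreconnected_of_forall 0 fun x hx => ?_
  obtain ⟨γ, hγ⟩ := hpath.joinedIn _ hx _ hone
  let γ' : C(unitInterval, {z : ℂ // z ≠ 0}) :=
    ⟨fun t => ⟨γ t, fun h => h0 (h ▸ hγ t)⟩, by fun_prop⟩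
  obtain ⟨Γ, hΓ, hΓ0⟩ :=
    Complex.isCoveringMap_exp.exists_path_lifts γ' x (Subtype.ext γ.source)
  have hexp : ∀ t, Complex.exp (Γ t) = γ t := fun t => congrArg Subtype.val (congrFun hΓ t)
  have hend : 0 ≤ (Γ 1).re := one_le_norm_exp_iff.1 (by rw [hexp, γ.target, norm_one])
  refine ⟨range Γ ∪ {z : ℂ | 0 ≤ z.re}, union_subset ?_ fun w hw => h1 (one_le_norm_exp_iff.2 hw),
    Or.inr Complex.zero_re.ge, Or.inl ⟨0, hΓ0⟩, ?_⟩
  · rintro _ ⟨t, rfl⟩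
    exact (hexp t).symm.subst (motive := (· ∈ U)) (hγ t)
  · exact IsPreconnected.union (Γ 1) ⟨1, rfl⟩ hend (isPreconnected_range Γ.continuous)
      (convex_halfSpace_re_ge 0).isPreconnected

lemma setOf_one_le_norm_subset (hU : Uᶜ ⊆ ball 0 1) : {z : ℂ | 1 ≤ ‖z‖} ⊆ U := fun _ hz =>
  by_contra fun hzU => (mem_ball_zero_iff.1 (hU hzU)).not_ge hz

lemma unbddComp_eq_outerComp (hK : (unbddComp K)ᶜ ⊆ ball 0 1) (hz : 1 ≤ ‖z‖) :
    unbddComp K = outerComp z K := by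
  have hout := setOf_one_le_norm_subset hK
  have houter : {w : ℂ | 1 ≤ ‖w‖} ⊆ outerComp z K :=
    isPreconnected_setOf_one_le_norm.subset_connectedComponentIn hz fun w hw => (hout hw).1
  refine Subset.antisymm (fun w hw => ?_) fun w hw => ⟨outerComp_subset_compl hw, ?_⟩
  · obtain ⟨w', hw', hnorm⟩ : ∃ w' ∈ connectedComponentIn Kᶜ w, 1 ≤ ‖w'‖ := by
      by_contra! hsmall
      exact hw.2 (isBounded_ball.subset fun w' hw' => mem_ball_zero_iff.2 (hsmall w' hw'))
    have heq : outerComp z K = connectedComponentIn Kᶜ w :=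
      (connectedComponentIn_eq (houter hnorm)).trans (connectedComponentIn_eq hw').symm
    exact heq ▸ mem_connectedComponentIn hw.1
  · rw [← connectedComponentIn_eq hw]
    exact (hout hz).2

lemma preimage_exp_outerComp (hK : IsClosed K) (h0 : (0 : ℂ) ∈ K)
    (h1 : {z : ℂ | 1 ≤ ‖z‖} ⊆ outerComp (Complex.exp p) K) (hp : 0 ≤ p.re) :
    Complex.exp ⁻¹' outerComp (Complex.exp p) K = outerComp p (Complex.exp ⁻¹' K) := by
  have hpre := isPreconnected_preimage_exp (isOpen_outerComp hK) isPreconnected_outerComp h1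
    fun h => outerComp_subset_compl h h0
  have hpmem : Complex.exp p ∈ outerComp (Complex.exp p) K := h1 (one_le_norm_exp_iff.2 hp)
  refine Subset.antisymm (hpre.subset_connectedComponentIn hpmem
    (preimage_mono outerComp_subset_compl)) (image_subset_iff.1 ?_)
  have hpK : p ∈ outerComp p (Complex.exp ⁻¹' K) :=
    mem_outerComp_self fun h => outerComp_subset_compl hpmem h
  exact (isPreconnected_outerComp.image _
    Complex.continuous_exp.continuousOn).subset_connectedComponentIn ⟨p, hpK, rfl⟩
      (image_subset_iff.2 (preimage_compl ▸ outerComp_subset_compl))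

lemma hatSet_compl_unbddComp (hK : IsClosed K) (h0 : (0 : ℂ) ∈ K)
    (hKb : (unbddComp K)ᶜ ⊆ ball 0 1) (hp : 0 ≤ p.re) :
    hatSet (unbddComp K)ᶜ = filledHull p (hatSet K) := by
  have hout := setOf_one_le_norm_subset hKb
  rw [unbddComp_eq_outerComp hKb (one_le_norm_exp_iff.2 hp)] at hout ⊢
  rw [hatSet_eq_preimage_exp, hatSet_eq_preimage_exp, filledHull, preimage_compl,
    preimage_exp_outerComp hK h0 hout hp]

end ExpPreimage

/-! ### The lifted isotopy -/

section IsotopyLift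

lemma exists_pos_le_norm_of_le_norm {E F T : Type*} [NormedAddCommGroup E]
    [NormedAddCommGroup F] [TopologicalSpace T] [T2Space T] {Y : Set E} {I : Set T} {h : E → T → F}
    (hY : IsCompact Y) (hI : IsCompact I)
    (hcont : ContinuousOn (fun q : E × T => h q.1 q.2) (Y ×ˢ I)) (hfix : ∀ t ∈ I, h 0 t = 0)
    {ε : ℝ} (hε : 0 < ε) : ∃ δ > 0, ∀ x ∈ Y, ∀ t ∈ I, ε ≤ ‖h x t‖ → δ ≤ ‖x‖ := by
  have hcompact : IsCompact (Y ×ˢ I ∩ (fun q : E × T => ‖h q.1 q.2‖) ⁻¹' Ici ε) :=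
    (hY.prod hI).of_isClosed_subset
      (hcont.norm.preimage_isClosed_of_isClosed (hY.prod hI).isClosed isClosed_Ici)
      inter_subset_left
  have h0 : (0 : E) ∉ Prod.fst '' (Y ×ˢ I ∩ (fun q : E × T => ‖h q.1 q.2‖) ⁻¹' Ici ε) := by
    rintro ⟨⟨x, t⟩, ⟨⟨-, ht⟩, hxt⟩, rfl⟩
    have hxt : ε ≤ ‖h 0 t‖ := hxt
    exact (hfix t ht ▸ hxt).not_gt (norm_zero.trans_lt hε)
  obtain ⟨δ, hδ, hball⟩ := Metric.mem_nhds_iff.1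
    ((hcompact.image continuous_fst).isClosed.isOpen_compl.mem_nhds h0)
  refine ⟨δ, hδ, fun x hx t ht hxt => not_lt.1 fun hlt => ?_⟩
  exact hball (mem_ball_zero_iff.2 hlt) ⟨(x, t), ⟨⟨hx, ht⟩, hxt⟩, rfl⟩

/-- `H` is a lift of `h`, restricted to `Y`, through `exp`: an isotopy of `exp⁻¹(Y \ {0})` starting
at the identity and covering `h`. -/
structure IsIsotopyLift (Y : Set ℂ) (h H : ℂ → ℝ → ℂ) : Prop where
  continuousOn : ContinuousOn (fun q : ℂ × ℝ => H q.1 q.2) (hatSet Y ×ˢ Icc 0 1)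
  injOn : ∀ t ∈ Icc (0 : ℝ) 1, InjOn (fun w => H w t) (hatSet Y)
  apply_zero : ∀ w ∈ hatSet Y, H w 0 = w
  exp_eq : ∀ w ∈ hatSet Y, ∀ t ∈ Icc (0 : ℝ) 1, Complex.exp (H w t) = h (Complex.exp w) t

lemma exp_add_int_mul (w : ℂ) (k : ℤ) :
    Complex.exp (w + k * (2 * Real.pi * Complex.I)) = Complex.exp w :=
  Complex.exp_periodic.int_mul k w

lemma add_int_mul_mem_hatSet {Y : Set ℂ} {w : ℂ} (hw : w ∈ hatSet Y) (k : ℤ) :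
    w + k * (2 * Real.pi * Complex.I) ∈ hatSet Y :=
  (exp_add_int_mul w k).symm.subst (motive := (· ∈ Y \ {0})) hw

namespace IsIsotopyLift

variable {Y : Set ℂ} {h H : ℂ → ℝ → ℂ} {t : ℝ}

lemma apply_add_int_mul (hH : IsIsotopyLift Y h H) {w : ℂ} (hw : w ∈ hatSet Y) (k : ℤ)
    (ht : t ∈ Icc (0 : ℝ) 1) :
    H (w + k * (2 * Real.pi * Complex.I)) t = H w t + k * (2 * Real.pi * Complex.I) := by
  have hwk := add_int_mul_mem_hatSet hw k
  have hc : ∀ x ∈ hatSet Y, ContinuousOn (H x) (Icc 0 1) := fun x hx =>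
    hH.continuousOn.comp (f := fun s : ℝ => (x, s)) (by fun_prop) fun _ hs => ⟨hx, hs⟩
  refine eqOn_of_eqOn_exp_comp isPreconnected_Icc (hc _ hwk)
    (g := fun s => H w s + k * (2 * Real.pi * Complex.I)) ((hc w hw).add continuousOn_const)
    (fun s hs => ?_) (left_mem_Icc.2 zero_le_one) ?_ ht
  · simp only [Function.comp_apply, exp_add_int_mul, hH.exp_eq _ hwk s hs, hH.exp_eq w hw s hs]
  · simp only [hH.apply_zero _ hwk, hH.apply_zero w hw]

lemma image_hatSet (hH : IsIsotopyLift Y h H) (ht : t ∈ Icc (0 : ℝ) 1) (hfix : h 0 t = 0) :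
    (fun w => H w t) '' hatSet Y = hatSet ((fun x => h x t) '' Y) := by
  refine Subset.antisymm (image_subset_iff.2 fun w hw => ?_) ?_
  · exact ⟨⟨_, hw.1, (hH.exp_eq w hw t ht).symm⟩, Complex.exp_ne_zero _⟩
  · rintro z ⟨⟨x, hx, hxz⟩, -⟩
    have hx0 : x ≠ 0 := by
      rintro rfl
      exact Complex.exp_ne_zero z (hxz.symm.trans hfix)
    have hlog : Complex.log x ∈ hatSet Y :=
      (Complex.exp_log hx0).symm.subst (motive := (· ∈ Y \ {0})) ⟨hx, hx0⟩
    have hexp := hH.exp_eq _ hlog t ht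
    rw [Complex.exp_log hx0] at hexp
    obtain ⟨k, hk⟩ := Complex.exp_eq_exp_iff_exists_int.1 (hxz.symm.trans hexp.symm)
    exact ⟨_, add_int_mul_mem_hatSet hlog k, (hH.apply_add_int_mul hlog k ht).trans hk.symm⟩

/-- By periodicity it suffices to bound the displacement on a compact part of a period strip. -/
lemma exists_norm_sub_le (hH : IsIsotopyLift Y h H) (hY : IsCompact Y) (c : ℝ) :
    ∃ D, ∀ w ∈ hatSet Y, c ≤ w.re → ∀ t ∈ Icc (0 : ℝ) 1, ‖H w t - w‖ ≤ D := by
  obtain ⟨R, hR, hYR⟩ := hY.isBounded.exists_pos_norm_le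
  have hPc : IsCompact (hatSet Y ∩ (Icc c (Real.log R) ×ℂ Icc 0 (2 * Real.pi))) :=
    (isCompact_Icc.reProdIm isCompact_Icc).inter_left (isClosed_hatSet hY.isClosed)
  obtain ⟨D, hD⟩ := ((hPc.prod (isCompact_Icc (a := (0 : ℝ)) (b := 1))).image_of_continuousOn
    ((hH.continuousOn.mono (prod_mono_left inter_subset_left)).sub
      continuousOn_fst)).isBounded.exists_norm_le
  refine ⟨D, fun w hw hc t ht => ?_⟩
  have hre : w.re ≤ Real.log R :=
    (Real.le_log_iff_exp_le hR).2 (Complex.norm_exp w ▸ hYR _ hw.1)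
  obtain ⟨k, hk, -⟩ := existsUnique_add_zsmul_mem_Ico Real.two_pi_pos w.im 0
  rw [zsmul_eq_mul, zero_add] at hk
  have hP : w + k * (2 * Real.pi * Complex.I) ∈
      hatSet Y ∩ (Icc c (Real.log R) ×ℂ Icc 0 (2 * Real.pi)) :=
    ⟨add_int_mul_mem_hatSet hw k, by simpa using ⟨hc, hre⟩, by simpa using ⟨hk.1, hk.2.le⟩⟩
  have hle : ‖H (w + k * (2 * Real.pi * Complex.I)) t - (w + k * (2 * Real.pi * Complex.I))‖ ≤ D :=
    hD _ ⟨(_, t), ⟨hP, ht⟩, rfl⟩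
  rwa [hH.apply_add_int_mul hw k ht, add_sub_add_right_eq_sub] at hle

/-- If `H w t` is bounded, then `exp (H w t)` is bounded below, hence so is `exp w`; there `w` is
moved by a bounded distance. -/
theorem isProperIsotopy (hH : IsIsotopyLift Y h H) (hY : IsCompact Y)
    (hcont : ContinuousOn (fun q : ℂ × ℝ => h q.1 q.2) (Y ×ˢ Icc 0 1))
    (hfix : ∀ t ∈ Icc (0 : ℝ) 1, h 0 t = 0) : IsProperIsotopy (hatSet Y) H := by
  refine ⟨hH.continuousOn, hH.injOn, hH.apply_zero, ?_⟩
  rw [← Metric.cobounded_eq_cocompact, ← tendsto_norm_atTop_iff_cobounded, Filter.tendsto_atTop]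
  intro M
  obtain ⟨δ, hδ, hδY⟩ := exists_pos_le_norm_of_le_norm hY isCompact_Icc hcont hfix
    (Real.exp_pos (-M))
  obtain ⟨D, hD⟩ := hH.exists_norm_sub_le hY (Real.log δ)
  rw [eventually_prod_principal_iff, eventually_inf_principal, Metric.cobounded_eq_cocompact]
  filter_upwards [(isCompact_closedBall (0 : ℂ) (M + D)).compl_mem_cocompact] with w hwM hw t ht
  by_contra! hlt
  refine hwM (mem_closedBall_zero_iff.2 ?_)
  have hexp : Real.exp (-M) ≤ ‖h (Complex.exp w) t‖ := by
    rw [← hH.exp_eq w hw t ht, Complex.norm_exp, Real.exp_le_exp]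
    exact neg_le_of_abs_le ((Complex.abs_re_le_norm _).trans hlt.le)
  have hre : Real.log δ ≤ w.re :=
    (Real.log_le_iff_le_exp hδ).2 (Complex.norm_exp w ▸ hδY _ hw.1 t ht hexp)
  calc ‖w‖ ≤ ‖H w t‖ + ‖H w t - w‖ := norm_le_norm_add_norm_sub _ _
    _ ≤ M + D := add_le_add hlt.le (hD w hw hre t ht)

end IsIsotopyLift

end IsotopyLift

/-! ### The decomposition of the lifted hull -/

section Decomposition

lemma biUnion_componentsOf_inter {E E' : Type*} [TopologicalSpace E] (S K : Set E)
    (f : E → Set E') : ⋃ C ∈ componentsOf S, ⋃ x ∈ C ∩ K, f x = ⋃ x ∈ S ∩ K, f x := by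
  refine Subset.antisymm (iUnion₂_subset ?_) (iUnion₂_subset fun x hx => ?_)
  · rintro _ ⟨y, -, rfl⟩
    exact biUnion_subset_biUnion_left (inter_subset_inter_left _ (connectedComponentIn_subset _ _))
  · exact (subset_biUnion_of_mem (u := f)
      (show x ∈ connectedComponentIn S x ∩ K from ⟨mem_connectedComponentIn hx.1, hx.2⟩)).trans
      (subset_biUnion_of_mem (u := fun C => ⋃ x ∈ C ∩ K, f x) ⟨x, hx.1, rfl⟩)

variable {p : ℂ} {A B X : Set ℂ} {h H : ℂ → ℝ → ℂ} {t : ℝ}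

theorem LogAbove.filledHull_decomposition (h : LogAbove p A B) (hA : IsClosed A) (hB : IsClosed B)
    (hNA : NoCompactClopen A) (hNB : NoCompactClopen B)
    (hslit : ∀ w ∈ A ∪ B, p - w ∈ Complex.slitPlane) {Z A' B' : Set ℂ}
    (hZ : Z = filledHull p (A ∪ B)) (hA' : A' = ⋃ a ∈ A, connectedComponentIn Z a)
    (hB' : B' = ⋃ b ∈ B, connectedComponentIn Z b) :
    Z = A' ∪ B' ∧ Disjoint A' B' ∧ IsClosed A' ∧ IsClosed B' ∧ NonInterlaced A' B' := by
  have hp : p ∉ A ∪ B := fun hpmem => Complex.slitPlane_ne_zero (hslit p hpmem) (sub_self p)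
  have hAB : Disjoint A B := disjoint_left.2 fun _ ha => outerComp_subset_compl (h.left_subset ha)
  have hdisj := disjoint_filledHull hA hB h.left_subset h.right_subset
  have hhullA := isClosed_filledHull (p := p) hA
  have hhullB := isClosed_filledHull (p := p) hB
  rw [filledHull_union hA hB hAB] at hZ
  rw [hZ, biUnion_connectedComponentIn_filledHull_union hA hhullB (fun hpA => hp (Or.inl hpA))
    hdisj] at hA'
  rw [hZ, union_comm, biUnion_connectedComponentIn_filledHull_union hB hhullA
    (fun hpB => hp (Or.inr hpB)) hdisj.symm] at hB'
  subst hA' hB'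
  exact ⟨hZ, hdisj, hhullA, hhullB, h.nonInterlaced_filledHull hA hB hNA hNB hslit⟩

theorem IsProperIsotopy.filledHull_decomposition (hH : IsProperIsotopy (A ∪ B) H)
    (h : LogAbove p A B) (hA : IsClosed A) (hB : IsClosed B) (hNA : NoCompactClopen A)
    (hNB : NoCompactClopen B)
    (hslit : ∀ w ∈ A ∪ B, ∀ t ∈ Icc (0 : ℝ) 1, p - H w t ∈ Complex.slitPlane)
    (ht : t ∈ Icc (0 : ℝ) 1) {Z A' B' : Set ℂ}
    (hZ : Z = filledHull p ((fun w => H w t) '' (A ∪ B)))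
    (hA' : A' = ⋃ a ∈ A, connectedComponentIn Z (H a t))
    (hB' : B' = ⋃ b ∈ B, connectedComponentIn Z (H b t)) :
    Z = A' ∪ B' ∧ Disjoint A' B' ∧ IsClosed A' ∧ IsClosed B' ∧ NonInterlaced A' B' := by
  have hHA := hH.mono subset_union_left
  have hHB := hH.mono subset_union_right
  refine (hH.logAbove h hA hB hNA hNB hslit ht).filledHull_decomposition
    (hHA.isClosed_image hA ht) (hHB.isClosed_image hB ht) (hHA.noCompactClopen_image hA hNA ht)
    (hHB.noCompactClopen_image hB hNB ht) ?_ (image_union (fun w => H w t) A B ▸ hZ)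
    (hA'.trans biUnion_image.symm) (hB'.trans biUnion_image.symm)
  rw [← image_union]
  rintro _ ⟨w, hw, rfl⟩
  exact hslit w hw t ht

lemma LiesAboveSets.logAbove_inter_bdLift (hAbove : LiesAboveSets A B) (hA : IsClosed A)
    (hB : IsClosed B) (hAB : Disjoint A B) (hX : hatSet X = A ∪ B) (hXcl : IsClosed X)
    (hXpre : IsPreconnected X) (hXc : IsPreconnected Xᶜ) (hXb : X ⊆ ball 0 1) (h0 : (0 : ℂ) ∈ X)
    (hNA : NoCompactClopen (A ∩ bdLift X)) (hNB : NoCompactClopen (B ∩ bdLift X)) :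
    LogAbove (1 + 2 * Real.pi * Complex.I) (A ∩ bdLift X) (B ∩ bdLift X) := by
  have hNC : NoCompactClopen (A ∪ B) := hX ▸ noCompactClopen_hatSet hXpre h0
  have hre : ∀ w ∈ A ∪ B, w.re < 0 := hX ▸ fun _ => re_neg_of_mem_hatSet hXb
  have hpre : IsPreconnected (A ∪ B)ᶜ := by
    rw [← hX, hatSet_eq_preimage_exp, ← preimage_compl]
    exact isPreconnected_preimage_exp hXcl.isOpen_compl hXc
      (setOf_one_le_norm_subset ((compl_compl X).trans_subset hXb)) (not_not_intro h0)
  have hbd : IsClosed (bdLift X) := isClosed_hatSet isClosed_frontier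
  exact (hAbove.logAbove hA hB hAB (hNC.of_union hAB hB) ((union_comm A B ▸ hNC).of_union hAB.symm
    hA) hre hpre).mono inter_subset_left inter_subset_left hNA hNB hA hB (hA.inter hbd)
    (hB.inter hbd)

namespace IsIsotopyLift

lemma hatXt_eq_filledHull (hH : IsIsotopyLift (frontier X) h H) (hX : IsCompact (frontier X))
    (hcont : ContinuousOn (fun x => h x t) (frontier X)) (h0 : (0 : ℂ) ∈ frontier X)
    (hfix : h 0 t = 0) (hXt : XtSet h X t ⊆ ball 0 1) (ht : t ∈ Icc (0 : ℝ) 1) (hp : 0 ≤ p.re) :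
    hatXt h X t = filledHull p ((fun w => H w t) '' bdLift X) :=
  (hatSet_compl_unbddComp (hX.image_of_continuousOn hcont).isClosed ⟨0, h0, hfix⟩ hXt hp).trans
    (congrArg (filledHull p) (hH.image_hatSet ht hfix).symm)

lemma sub_mem_slitPlane (hH : IsIsotopyLift (frontier X) h H) (hfix : h 0 t = 0)
    (hXt : XtSet h X t ⊆ ball 0 1) (ht : t ∈ Icc (0 : ℝ) 1) (hp : 0 ≤ p.re) {w : ℂ}
    (hw : w ∈ bdLift X) : p - H w t ∈ Complex.slitPlane := by
  have hmem : H w t ∈ hatSet ((fun x => h x t) '' frontier X) :=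
    hH.image_hatSet ht hfix ▸ mem_image_of_mem _ hw
  have himage : (fun x => h x t) '' frontier X ⊆ ball 0 1 :=
    fun _ hx => hXt fun hxU => hxU.1 hx
  exact Or.inl (sub_pos.2 ((re_neg_of_mem_hatSet himage hmem).trans_le hp))

end IsIsotopyLift

end Decomposition

/-- if `X̂⁰ = A⁰ ∪ B⁰` with `A⁰, B⁰` disjoint closed and `A⁰` lying above
`B⁰`, then for each `t`, `X̂^t = A^t ∪ B^t` where `A^t, B^t` are the unions of the
corresponding components, and `A^t`, `B^t` are disjoint, closed and non-interlaced. -/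
theorem decomposition_preserved_nonInterlaced
    (X : Set ℂ) (hXne : X.Nonempty) (hXcpt : IsCompact X) (hXconn : IsConnected X)
    (hXns : IsConnected Xᶜ) (h0 : (0:ℂ) ∈ frontier X) (hXb : X ⊆ Metric.ball 0 1)
    (h : ℂ → ℝ → ℂ)
    (hcont : ContinuousOn (fun p : ℂ × ℝ => h p.1 p.2) (frontier X ×ˢ Set.Icc 0 1))
    (hinj : ∀ t ∈ Set.Icc (0:ℝ) 1, Set.InjOn (fun z => h z t) (frontier X))
    (hid : ∀ z ∈ frontier X, h z 0 = z)
    (hfix : ∀ t ∈ Set.Icc (0:ℝ) 1, h 0 t = 0)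
    (hXtb : ∀ t ∈ Set.Icc (0:ℝ) 1, XtSet h X t ⊆ Metric.ball 0 1)
    -- 𝐡 = H, the lift of h with 𝐡⁰ = id :
    (H : ℂ → ℝ → ℂ)
    (hHcont : ContinuousOn (fun p : ℂ × ℝ => H p.1 p.2) (bdLift X ×ˢ Set.Icc 0 1))
    (hHinj : ∀ t ∈ Set.Icc (0:ℝ) 1, Set.InjOn (fun z => H z t) (bdLift X))
    (hH0 : ∀ z ∈ bdLift X, H z 0 = z)
    (hHlift : ∀ z ∈ bdLift X, ∀ t ∈ Set.Icc (0:ℝ) 1,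
      Complex.exp (H z t) = h (Complex.exp z) t)
    (A0 B0 : Set ℂ) (hAB : hatSet X = A0 ∪ B0) (hABdisj : Disjoint A0 B0)
    (hAcl : IsClosed A0) (hBcl : IsClosed B0) (habove : LiesAboveSets A0 B0) :
    ∀ t ∈ Set.Icc (0:ℝ) 1, ∀ At Bt : Set ℂ,
      At = (⋃ C ∈ componentsOf A0, ⋃ x ∈ C ∩ bdLift X,
              connectedComponentIn (hatXt h X t) (H x t)) →
      Bt = (⋃ C ∈ componentsOf B0, ⋃ x ∈ C ∩ bdLift X,
              connectedComponentIn (hatXt h X t) (H x t)) →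
      (hatXt h X t = At ∪ Bt ∧ Disjoint At Bt ∧ IsClosed At ∧ IsClosed Bt ∧
        NonInterlaced At Bt) := by
  intro t ht At Bt hAt hBt
  have hX := hXcpt.isClosed
  have hXbd : IsCompact (frontier X) :=
    hXcpt.of_isClosed_subset isClosed_frontier hX.frontier_subset
  have hbdcl : IsClosed (bdLift X) := isClosed_hatSet isClosed_frontier
  have hsub : bdLift X ⊆ A0 ∪ B0 := hAB ▸ preimage_mono (sdiff_subset_sdiff_left hX.frontier_subset)
  have hunion : A0 ∩ bdLift X ∪ B0 ∩ bdLift X = bdLift X := by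
    rw [← union_inter_distrib_right, inter_eq_right.2 hsub]
  have hNC : NoCompactClopen (bdLift X) := noCompactClopen_hatSet
    (isPreconnected_frontier hX hXconn.isPreconnected hXns.isPreconnected) h0
  have hNA := hNC.inter_of_subset_union hsub hABdisj hBcl
  have hNB := hNC.inter_of_subset_union (union_comm A0 B0 ▸ hsub) hABdisj.symm hAcl
  have hlog := habove.logAbove_inter_bdLift hAcl hBcl hABdisj hAB hX hXconn.isPreconnected
    hXns.isPreconnected hXb (hX.frontier_subset h0) hNA hNB
  have hH : IsIsotopyLift (frontier X) h H := ⟨hHcont, hHinj, hH0, hHlift⟩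
  have hp : 0 ≤ (1 + 2 * Real.pi * Complex.I : ℂ).re := by simp
  have hhat := hH.hatXt_eq_filledHull hXbd (hcont.comp (f := fun x : ℂ => (x, t)) (by fun_prop)
    fun x hx => ⟨hx, ht⟩) h0 (hfix t ht) (hXtb t ht) ht hp
  rw [biUnion_componentsOf_inter] at hAt hBt
  exact ((hH.isProperIsotopy hXbd hcont hfix).mono hunion.subset).filledHull_decomposition hlog
    (hAcl.inter hbdcl) (hBcl.inter hbdcl) hNA hNB
    (fun w hw s hs => hH.sub_mem_slitPlane (hfix s hs) (hXtb s hs) hs hp (hunion.subset hw))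
    ht (hunion.symm ▸ hhat) hAt hBt
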